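/- arXiv:1901.03406 — 4 statements merged into one kernel-verified Lean document; each statement's English description precedes it below -/
import Mathlib

section
/- Let G be an infinite discrete group. Then the Bernoulli flow 2^G is disjoint from every minimal G-flow; that is, for every minimal G-flow X, the only closed G-invariant subset of X × 2^G that projects onto both X and 2^G is X × 2^G itself. -/
open Pointwise

section Defs

variable (G : Type*) [Group G]

/-- The right-shift of `G` on `G → A`: `(g • z) h = z (h * g)`. -/
instance (priority := high) shiftSMul (A : Type*) : SMul G (G → A) :=
  ⟨fun g z h => z (h * g)⟩

/-- The right-shift action of `G` on `G → A` is a `G`-action (the Bernoulli flow when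
`A = Bool`). -/
instance shiftMulAction (A : Type*) : MulAction G (G → A) where
  one_smul z := funext fun h => by show z (h * 1) = z h; rw [mul_one]
  mul_smul g₁ g₂ z := funext fun h => by
    show z (h * (g₁ * g₂)) = z (h * g₁ * g₂)
    rw [mul_assoc]

/-- `S ⊆ G` is `D`-separated if `Dg ∩ Dh = ∅` for all distinct `g, h ∈ S`. -/
def DSeparated (D S : Set G) : Prop :=
  ∀ g ∈ S, ∀ h ∈ S, g ≠ h → Disjoint (D * ({g} : Set G)) (D * ({h} : Set G))

/-- The separated covering property for a `G`-flow `X`: for every finite `D ⊆ G`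
and every nonempty open `U ⊆ X` there is a `D`-separated `S ⊆ G` with `S⁻¹U = X`. -/
def SCP (X : Type*) [TopologicalSpace X] [MulAction G X] : Prop :=
  ∀ D : Set G, D.Finite → ∀ U : Set X, IsOpen U → U.Nonempty →
    ∃ S : Set G, DSeparated G D S ∧ ∀ x : X, ∃ s ∈ S, s • x ∈ U

/-- A `G`-flow is minimal if every orbit is dense. -/
def IsMinimalFlow (X : Type*) [TopologicalSpace X] [MulAction G X] : Prop :=
  ∀ x : X, Dense (MulAction.orbit G x)

/-- Two `G`-flows `X` and `Y` are disjoint if the only closed `G`-invariant subset of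
`X × Y` projecting onto both factors is `X × Y` itself. -/
def FlowsDisjoint (X Y : Type*) [TopologicalSpace X] [TopologicalSpace Y]
    [MulAction G X] [MulAction G Y] : Prop :=
  ∀ J : Set (X × Y), IsClosed J → (∀ (g : G), ∀ p ∈ J, g • p ∈ J) →
    Prod.fst '' J = Set.univ → Prod.snd '' J = Set.univ → J = Set.univ

end Defs

section Helpers

open MeasureTheory ProbabilityTheory

/-- The separated covering property implies disjointness from the Bernoulli flow. -/
theorem disjoint_of_SCP {G : Type*} [Group G] {X : Type*} [TopologicalSpace X]
    [MulAction G X] (h : SCP G X) : FlowsDisjoint G X (G → Bool) := by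
  classical
  intro J hJc hJinv _ hJ2
  rw [← hJc.closure_eq]
  refine Set.eq_univ_of_forall fun ⟨x, w⟩ => ?_
  rw [mem_closure_iff]
  intro O hO hxw
  obtain ⟨U, V, hU, hV, hxU, hwV, hUV⟩ := isOpen_prod_iff.1 hO x w hxw
  obtain ⟨I, u, hIu, hsub⟩ := isOpen_pi_iff.1 hV w hwV
  obtain ⟨S, hS, hcov⟩ := h (I : Set G) I.finite_toSet U hU ⟨x, hxU⟩
  let z : G → Bool := fun g =>
    if hg : ∃ s ∈ S, g * s⁻¹ ∈ I then w (g * hg.choose⁻¹) else false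
  have hz : ∀ s ∈ S, ∀ d ∈ I, z (d * s) = w d := by
    intro s hs d hd
    have hg : ∃ s' ∈ S, d * s * s'⁻¹ ∈ I := ⟨s, hs, by simpa using hd⟩
    have hzz : z (d * s) = w (d * s * hg.choose⁻¹) := by simp only [z]; rw [dif_pos hg]
    obtain ⟨h1, h2⟩ := hg.choose_spec
    have : s = hg.choose := by
      by_contra hne
      have hm1 : d * s ∈ (I : Set G) * ({s} : Set G) :=
        Set.mem_mul.2 ⟨d, hd, s, rfl, rfl⟩
      have hm2 : d * s ∈ (I : Set G) * ({hg.choose} : Set G) :=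
        Set.mem_mul.2 ⟨_, h2, _, rfl, by simp⟩
      exact Set.disjoint_left.1 (hS _ hs _ h1 hne) hm1 hm2
    rw [hzz, ← this]; simp
  obtain ⟨⟨x', z'⟩, hp, hpz⟩ : z ∈ Prod.snd '' J := by rw [hJ2]; trivial
  have hpz' : z' = z := hpz
  rw [hpz'] at hp
  obtain ⟨s, hs, hsU⟩ := hcov x'
  refine ⟨s • (x', z), hUV ⟨hsU, hsub ?_⟩, hJinv s _ hp⟩
  intro d hd
  have : (s • z) d = w d := hz s hs d hd
  show (s • z) d ∈ u d
  rw [this]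
  exact (hIu d hd).2

/-- Symmetric Lovász local lemma. -/
theorem local_lemma {Ω ι : Type*} [MeasurableSpace Ω] (μ : Measure Ω) [IsProbabilityMeasure μ]
    (B : ι → Set Ω) (p d : ℝ) (hp : 0 ≤ p)
    (hB : ∀ i, MeasurableSet (B i)) (nbr : ι → Finset ι)
    (hd : ∀ i, ((nbr i).card : ℝ) ≤ d)
    (hind : ∀ i, ∀ T : Finset ι, Disjoint T (nbr i) →
      μ.real (B i ∩ ⋂ j ∈ T, (B j)ᶜ) ≤ p * μ.real (⋂ j ∈ T, (B j)ᶜ))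
    (h4 : 4 * (p * d) ≤ 1) (h2 : 2 * p < 1) (T : Finset ι) :
    0 < μ.real (⋂ j ∈ T, (B j)ᶜ) := by
  classical
  have key : ∀ n : ℕ, ∀ T : Finset ι, T.card = n → ∀ i,
      μ.real (B i ∩ ⋂ j ∈ T, (B j)ᶜ) ≤ 2 * p * μ.real (⋂ j ∈ T, (B j)ᶜ) := by
    intro n
    induction n using Nat.strong_induction_on with
    | _ n ih =>
    intro T hT i
    set T1 := T ∩ nbr i with hT1
    set T2 := T \ nbr i with hT2
    have hdis : Disjoint T2 (nbr i) := Finset.sdiff_disjoint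
    have h0 := hind i T2 hdis
    have hmono : μ.real (B i ∩ ⋂ j ∈ T, (B j)ᶜ) ≤ μ.real (B i ∩ ⋂ j ∈ T2, (B j)ᶜ) := by
      refine measureReal_mono (Set.inter_subset_inter_right _ ?_)
      exact Set.biInter_subset_biInter_left (fun j hj => (Finset.mem_sdiff.1 hj).1)
    have hsub : (⋂ j ∈ T2, (B j)ᶜ) ⊆
        (⋂ j ∈ T, (B j)ᶜ) ∪ ⋃ j ∈ T1, (B j ∩ ⋂ j ∈ T2, (B j)ᶜ) := by
      intro z hz
      by_cases hzT : z ∈ ⋂ j ∈ T, (B j)ᶜ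
      · exact Or.inl hzT
      · right
        simp only [Set.mem_iInter, not_forall, Set.mem_compl_iff, not_not] at hzT
        obtain ⟨j, hj, hjB⟩ := hzT
        have hjn : j ∈ nbr i := by
          by_contra hjn
          have := Set.mem_iInter₂.1 hz j (Finset.mem_sdiff.2 ⟨hj, hjn⟩)
          exact this hjB
        exact Set.mem_iUnion₂.2 ⟨j, Finset.mem_inter.2 ⟨hj, hjn⟩, hjB, hz⟩
    have hle : μ.real (⋂ j ∈ T2, (B j)ᶜ) ≤ μ.real (⋂ j ∈ T, (B j)ᶜ) +
        ∑ j ∈ T1, μ.real (B j ∩ ⋂ j ∈ T2, (B j)ᶜ) := by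
      refine (measureReal_mono hsub).trans ((measureReal_union_le _ _).trans ?_)
      gcongr
      exact measureReal_biUnion_finset_le _ _
    have hsum : ∑ j ∈ T1, μ.real (B j ∩ ⋂ j ∈ T2, (B j)ᶜ) ≤
        T1.card * (2 * p * μ.real (⋂ j ∈ T2, (B j)ᶜ)) := by
      rw [← nsmul_eq_mul]
      apply Finset.sum_le_card_nsmul
      intro j hj
      refine ih T2.card ?_ T2 rfl j
      rw [← hT]
      apply Finset.card_lt_card
      refine ⟨Finset.sdiff_subset, fun hss => ?_⟩
      have hj' := Finset.mem_inter.1 hj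
      exact (Finset.mem_sdiff.1 (hss hj'.1)).2 hj'.2
    have hcard : (T1.card : ℝ) ≤ d :=
      le_trans (by exact_mod_cast Finset.card_le_card Finset.inter_subset_right) (hd i)
    have hM : 0 ≤ μ.real (⋂ j ∈ T2, (B j)ᶜ) := measureReal_nonneg
    set M := μ.real (⋂ j ∈ T2, (B j)ᶜ)
    set L := μ.real (⋂ j ∈ T, (B j)ᶜ)
    have h5 : (T1.card : ℝ) * (2 * p * M) ≤ d * (2 * p * M) := by gcongr
    have h6 : 4 * (p * d) * M ≤ 1 * M := by gcongr
    have h7 : M ≤ 2 * L := by nlinarith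
    have h8 : p * M ≤ p * (2 * L) := by gcongr
    linarith
  induction T using Finset.induction_on with
  | empty => simp
  | insert i T hi ih =>
    have h1 := key _ T rfl i
    have hm := measureReal_inter_add_sdiff (μ := μ) (s := ⋂ j ∈ T, (B j)ᶜ) (hB i)
    rw [Finset.set_biInter_insert, Set.inter_comm, ← Set.sdiff_eq]
    rw [Set.inter_comm] at hm
    nlinarith

/-- The fair coin. -/
noncomputable def coin : Measure Bool :=
  (2⁻¹ : ENNReal) • (Measure.dirac true + Measure.dirac false)

instance : IsProbabilityMeasure coin := by
  constructor
  simp [coin, ENNReal.inv_two_add_inv_two]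

theorem coin_singleton (b : Bool) : coin {b} = 2⁻¹ := by
  cases b <;> simp [coin]

/-- The fair coin product measure. -/
noncomputable def coins (G : Type*) : Measure (G → Bool) := Measure.infinitePi fun _ => coin

instance (G : Type*) : IsProbabilityMeasure (coins G) := by unfold coins; infer_instance

/-- `P` depends only on the coordinates in `W`. -/
def Dep {G : Type*} (W : Finset G) (P : Set (G → Bool)) : Prop :=
  ∀ z z' : G → Bool, (∀ i ∈ W, z i = z' i) → z ∈ P → z' ∈ P

theorem Dep.eq_preimage {G : Type*} {W : Finset G} {P : Set (G → Bool)} (h : Dep W P) :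
    P = (fun (z : G → Bool) (i : W) => z i) ⁻¹' ((fun (z : G → Bool) (i : W) => z i) '' P) := by
  ext z
  constructor
  · exact fun hz => ⟨z, hz, rfl⟩
  · rintro ⟨z', hz', he⟩
    exact h z' z (fun i hi => congrFun he ⟨i, hi⟩) hz'

theorem Dep.measurableSet {G : Type*} {W : Finset G} {P : Set (G → Bool)} (h : Dep W P) :
    MeasurableSet P := by
  rw [h.eq_preimage]
  exact (by fun_prop : Measurable (fun (z : G → Bool) (i : W) => z i)) (Set.toFinite _).measurableSet

theorem Dep.isClosed {G : Type*} {W : Finset G} {P : Set (G → Bool)} (h : Dep W P) :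
    IsClosed P := by
  rw [h.eq_preimage]
  exact (Set.toFinite _).isClosed.preimage
    (by fun_prop : Continuous (fun (z : G → Bool) (i : W) => z i))

theorem Dep.compl {G : Type*} {W : Finset G} {P : Set (G → Bool)} (h : Dep W P) :
    Dep W Pᶜ := fun z z' hzz hz hz' => hz (h z' z (fun i hi => (hzz i hi).symm) hz')

theorem Dep.mono {G : Type*} {W W' : Finset G} {P : Set (G → Bool)} (h : Dep W P)
    (hW : W ⊆ W') : Dep W' P := fun z z' hzz => h z z' fun i hi => hzz i (hW hi)

theorem Dep.biInter {G ι : Type*} [DecidableEq G] {W : ι → Finset G} {P : ι → Set (G → Bool)}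
    (T : Finset ι) (h : ∀ j ∈ T, Dep (W j) (P j)) :
    Dep (T.biUnion W) (⋂ j ∈ T, P j) := by
  intro z z' hzz hz
  refine Set.mem_iInter₂.2 fun j hj => ?_
  exact h j hj z z' (fun i hi => hzz i (Finset.mem_biUnion.2 ⟨j, hj, hi⟩))
    (Set.mem_iInter₂.1 hz j hj)

theorem Dep.indep {G : Type*} {W W' : Finset G} {P P' : Set (G → Bool)} (h : Dep W P)
    (h' : Dep W' P') (hd : Disjoint W W') :
    (coins G).real (P ∩ P') = (coins G).real P * (coins G).real P' := by
  have hi : iIndepFun (fun (i : G) (z : G → Bool) => z i) (coins G) :=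
    iIndepFun_infinitePi (P := fun _ : G => coin) (X := fun _ b => b) (fun _ => measurable_id)
  have hi2 := hi.indepFun_finset W W' hd (fun i => measurable_pi_apply i)
  have := hi2.measure_inter_preimage_eq_mul
    ((fun (z : G → Bool) (i : W) => z i) '' P) ((fun (z : G → Bool) (i : W') => z i) '' P')
    (Set.toFinite _).measurableSet (Set.toFinite _).measurableSet
  rw [← h.eq_preimage, ← h'.eq_preimage] at this
  simp only [Measure.real, this, ENNReal.toReal_mul]

theorem indep_biInter {G ι : Type*} [DecidableEq G] {W : ι → Finset G} {P : ι → Set (G → Bool)}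
    (q : ℝ) (hq : 0 ≤ q)
    (T : Finset ι) (h : ∀ j ∈ T, Dep (W j) (P j))
    (hdis : ∀ i ∈ T, ∀ j ∈ T, i ≠ j → Disjoint (W i) (W j))
    (hP : ∀ j ∈ T, (coins G).real (P j) ≤ q) :
    (coins G).real (⋂ j ∈ T, P j) ≤ q ^ T.card := by
  classical
  induction T using Finset.induction_on with
  | empty => simp
  | insert i T hi ih =>
    have ih' := ih (fun j hj => h j (Finset.mem_insert_of_mem hj))
      (fun i hi j hj => hdis i (Finset.mem_insert_of_mem hi) j (Finset.mem_insert_of_mem hj))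
      (fun j hj => hP j (Finset.mem_insert_of_mem hj))
    rw [Finset.set_biInter_insert, Finset.card_insert_of_notMem hi, pow_succ',
      (h i (Finset.mem_insert_self _ _)).indep
        (Dep.biInter T fun j hj => h j (Finset.mem_insert_of_mem hj))]
    · exact mul_le_mul (hP i (Finset.mem_insert_self _ _)) ih' measureReal_nonneg hq
    · rw [Finset.disjoint_biUnion_right]
      intro j hj
      exact hdis i (Finset.mem_insert_self _ _) j (Finset.mem_insert_of_mem hj)
        (fun e => hi (e ▸ hj))

/-- The independent set attached to a random colouring. -/
def indSet {G : Type*} [Group G] (E : Finset G) (z : G → Bool) : Set G :=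
  {g | z g = true ∧ ∀ e ∈ E, e ≠ 1 → z (e * g) = false}

theorem dep_indSet {G : Type*} [Group G] [DecidableEq G] (E : Finset G) (h1 : 1 ∈ E) (g : G) :
    Dep (E.image (· * g)) {z | g ∈ indSet E z} := by
  rintro z z' hzz ⟨ha, hb⟩
  refine ⟨?_, fun e he hne => ?_⟩
  · rw [← hzz g (Finset.mem_image.2 ⟨1, h1, one_mul g⟩)]; exact ha
  · rw [← hzz (e * g) (Finset.mem_image.2 ⟨e, he, rfl⟩)]; exact hb e he hne

theorem prob_indSet {G : Type*} [Group G] (E : Finset G) (h1 : 1 ∈ E) (g : G) :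
    (1 / 2 : ℝ) ^ E.card ≤ (coins G).real {z | g ∈ indSet E z} := by
  classical
  have hsub : Set.pi (E.image (· * g) : Finset G) (fun i => {decide (i = g)}) ⊆
      {z | g ∈ indSet E z} := by
    intro z hz
    refine ⟨?_, fun e he hne => ?_⟩
    · have := hz g (by simpa using h1)
      simpa using this
    · have := hz (e * g) (by simpa using he)
      simpa [hne] using this
  refine le_trans (le_of_eq ?_) (measureReal_mono hsub)
  rw [Measure.real, coins, Measure.infinitePi_pi _ (fun i _ => measurableSet_singleton _)]
  simp only [coin_singleton, Finset.prod_const]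
  rw [Finset.card_image_of_injective _ (mul_left_injective g)]
  simp

theorem exists_transversal {G : Type*} [Group G] (E : Finset G) (h1 : 1 ∈ E) :
    ∃ N : ℕ, ∀ A : Finset G, A.card = N →
      (∀ a ∈ A, ∀ b ∈ A, a ≠ b → ∀ e ∈ E, ∀ f ∈ E, e * a ≠ f * b) →
      ∃ z : G → Bool, ∀ g, ∃ a ∈ A, a * g ∈ indSet E z := by
  classical
  set m := E.card
  set q : ℝ := 1 - (1 / 2) ^ m with hq
  have hhalf : (1 / 2 : ℝ) ^ m ≤ 1 := pow_le_one₀ (by norm_num) (by norm_num)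
  have hhalf0 : (0 : ℝ) < (1 / 2 : ℝ) ^ m := by positivity
  have hq0 : 0 ≤ q := by linarith
  have hq1 : q < 1 := by linarith
  have hlim1 : Filter.Tendsto (fun n : ℕ => (n : ℝ) ^ 2 * q ^ n) Filter.atTop (nhds 0) :=
    tendsto_pow_const_mul_const_pow_of_abs_lt_one 2 (by rw [abs_of_nonneg hq0]; exact hq1)
  have hlim2 : Filter.Tendsto (fun n : ℕ => q ^ n) Filter.atTop (nhds 0) :=
    tendsto_pow_atTop_nhds_zero_of_lt_one hq0 hq1
  have hlim3 : Filter.Tendsto (fun n : ℕ => (4 * (m : ℝ) ^ 2) * ((n : ℝ) ^ 2 * q ^ n))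
      Filter.atTop (nhds 0) := by simpa using hlim1.const_mul (4 * (m : ℝ) ^ 2)
  obtain ⟨N, hN1, hN2⟩ := ((hlim3.eventually_lt_const one_pos).and
    (hlim2.eventually_lt_const (by norm_num : (0 : ℝ) < 1 / 2))).exists
  refine ⟨N, fun A hA hsep => ?_⟩
  let W : G → Finset G := fun g => E.image (· * g)
  let B : G → Set (G → Bool) := fun g => ⋂ a ∈ A, {z | a * g ∈ indSet E z}ᶜ
  let WA : G → Finset G := fun g => A.biUnion fun a => W (a * g)
  have hBdep : ∀ g, Dep (WA g) (B g) := fun g =>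
    Dep.biInter A fun a _ => (dep_indSet E h1 (a * g)).compl
  have hBp : ∀ g, (coins G).real (B g) ≤ q ^ N := by
    intro g
    rw [← hA]
    refine indep_biInter (W := fun a => W (a * g)) q hq0 A
      (fun a _ => (dep_indSet E h1 (a * g)).compl) ?_ ?_
    · intro a ha b hb hab
      rw [Finset.disjoint_left]
      intro x hx hy
      obtain ⟨e, he, rfl⟩ := Finset.mem_image.1 hx
      obtain ⟨f, hf, hfe⟩ := Finset.mem_image.1 hy
      refine hsep a ha b hb hab e he f hf ?_
      simp only [← mul_assoc] at hfe
      exact (mul_right_cancel hfe).symm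
    · intro a _
      have h2 := measureReal_add_measureReal_compl (μ := coins G)
        (dep_indSet E h1 (a * g)).measurableSet
      have h3 := prob_indSet E h1 (a * g)
      rw [probReal_univ] at h2
      linarith
  let nbr : G → Finset G := fun g =>
    ((A ×ˢ E) ×ˢ (A ×ˢ E)).image fun t => t.1.1⁻¹ * t.1.2⁻¹ * t.2.2 * t.2.1 * g
  have hpos := local_lemma (coins G) B (q ^ N) ((N * m) ^ 2) (by positivity)
    (fun i => (hBdep i).measurableSet) nbr ?_ ?_ ?_ ?_
  · have hne : (⋂ g, (B g)ᶜ).Nonempty := by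
      apply CompactSpace.iInter_nonempty
      · exact fun g => (hBdep g).compl.isClosed
      · intro T
        exact nonempty_of_measureReal_ne_zero (hpos T).ne'
    obtain ⟨z, hz⟩ := hne
    refine ⟨z, fun g => ?_⟩
    have := Set.mem_iInter.1 hz g
    by_contra hcon
    push Not at hcon
    exact this (Set.mem_iInter₂.2 fun a ha => hcon a ha)
  · intro g
    have : (nbr g).card ≤ (N * m) ^ 2 := by
      refine Finset.card_image_le.trans ?_
      simp only [Finset.card_product, hA]
      rw [pow_two]
    exact_mod_cast this
  · intro g T hT
    rw [(hBdep g).indep (Dep.biInter T fun j _ => (hBdep j).compl)]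
    · exact mul_le_mul_of_nonneg_right (hBp g) measureReal_nonneg
    · rw [Finset.disjoint_biUnion_right]
      intro j hj
      rw [Finset.disjoint_left]
      intro x hx hy
      obtain ⟨a, ha, hx⟩ := Finset.mem_biUnion.1 hx
      obtain ⟨e, he, rfl⟩ := Finset.mem_image.1 hx
      obtain ⟨b, hb, hy⟩ := Finset.mem_biUnion.1 hy
      obtain ⟨f, hf, hfe⟩ := Finset.mem_image.1 hy
      refine Finset.disjoint_left.1 hT hj (Finset.mem_image.2
        ⟨((b, f), (a, e)), by simp [ha, hb, he, hf], ?_⟩)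
      simp only at hfe ⊢
      rw [mul_assoc, mul_assoc, ← hfe]
      group
  · have : 4 * (q ^ N * ((N : ℝ) * m) ^ 2) = (4 * (m : ℝ) ^ 2) * ((N : ℝ) ^ 2 * q ^ N) := by ring
    rw [this]; exact hN1.le
  · linarith

theorem exists_sparse {G : Type*} [Group G] (E : Finset G) (R : Set G) (hR : R.Infinite) (N : ℕ) :
    ∃ A : Finset G, A.card = N ∧ (∀ a ∈ A, a ∈ R) ∧
      (∀ a ∈ A, ∀ b ∈ A, a ≠ b → ∀ e ∈ E, ∀ f ∈ E, e * a ≠ f * b) := by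
  classical
  induction N with
  | zero => exact ⟨∅, by simp⟩
  | succ n ih =>
    obtain ⟨A, hc, hA, hs⟩ := ih
    let F : Finset G := A ∪ ((E ×ˢ E) ×ˢ A).image fun t => t.1.1⁻¹ * t.1.2 * t.2
    obtain ⟨r, hr, hrF⟩ := hR.exists_notMem_finset F
    have hrA : r ∉ A := fun h => hrF (Finset.mem_union_left _ h)
    have hrE : ∀ a ∈ A, ∀ e ∈ E, ∀ f ∈ E, e * r ≠ f * a := by
      intro a ha e he f hf h
      refine hrF (Finset.mem_union_right _ (Finset.mem_image.2
        ⟨((e, f), a), by simp [ha, he, hf], ?_⟩))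
      simp only
      rw [mul_assoc, ← h]; group
    refine ⟨insert r A, by rw [Finset.card_insert_of_notMem hrA, hc], ?_, ?_⟩
    · intro a ha
      rcases Finset.mem_insert.1 ha with rfl | ha
      exacts [hr, hA a ha]
    · intro a ha b hb hab e he f hf
      rcases Finset.mem_insert.1 ha with ha' | ha' <;> rcases Finset.mem_insert.1 hb with hb' | hb'
      · exact absurd (ha'.trans hb'.symm) hab
      · rw [ha']; exact hrE b hb' e he f hf
      · rw [hb']; exact (hrE a ha' f hf e he).symm
      · exact hs a ha' b hb' hab e he f hf

theorem returns_infinite {G : Type*} [Group G] [Infinite G] {X : Type*} [TopologicalSpace X]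
    [CompactSpace X] [MulAction G X] [ContinuousConstSMul G X] (hX : IsMinimalFlow G X)
    (U : Set X) (hU : IsOpen U) (hne : U.Nonempty) (y : X) : {g : G | g • y ∈ U}.Infinite := by
  classical
  intro hfin
  have hcov : (Set.univ : Set X) ⊆ ⋃ g : G, {x | g • x ∈ U} := by
    intro x _
    obtain ⟨_, hu, g, rfl⟩ := (hX x).inter_open_nonempty U hU hne
    exact Set.mem_iUnion.2 ⟨g, hu⟩
  obtain ⟨F, hF⟩ := isCompact_univ.elim_finite_subcover _
    (fun g : G => hU.preimage (continuous_const_smul g)) hcov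
  have : (Set.univ : Set G) ⊆ ⋃ f ∈ F, (fun g => f⁻¹ * g) '' {g : G | g • y ∈ U} := by
    intro g _
    obtain ⟨f, hf, hfg⟩ := Set.mem_iUnion₂.1 (hF (Set.mem_univ (g • y)))
    refine Set.mem_iUnion₂.2 ⟨f, hf, f * g, ?_, by simp⟩
    show (f * g) • y ∈ U
    rw [mul_smul]; exact hfg
  exact Set.infinite_univ ((F.finite_toSet.biUnion fun f _ => hfin.image _).subset this)

theorem SCP_of_minimal {G : Type*} [Group G] [Infinite G] {X : Type*} [TopologicalSpace X]
    [CompactSpace X] [MulAction G X] [ContinuousConstSMul G X]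
    (hX : IsMinimalFlow G X) : SCP G X := by
  classical
  intro D hD U hU hne
  let D' := hD.toFinset
  let E : Finset G := insert 1 ((D' ×ˢ D').image fun t => t.1⁻¹ * t.2)
  obtain ⟨N, hN⟩ := exists_transversal E (Finset.mem_insert_self _ _)
  obtain ⟨y, hy⟩ := hne
  obtain ⟨A, hAc, hAR, hAs⟩ := exists_sparse E _ (returns_infinite hX U hU ⟨y, hy⟩ y) N
  obtain ⟨z, hz⟩ := hN A hAc hAs
  refine ⟨indSet E z, ?_, fun x => ?_⟩
  · intro g hg h hh hne
    rw [Set.disjoint_left]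
    rintro x ⟨d, hd, g', hg', hx⟩ ⟨d', hd', h', hh', hx'⟩
    have he : d' * h = d * g := by
      rw [← Set.mem_singleton_iff.1 hg', ← Set.mem_singleton_iff.1 hh']
      exact hx'.trans hx.symm
    have hhe : h = (d'⁻¹ * d) * g := by rw [mul_assoc, ← he]; simp
    have h1 : d'⁻¹ * d ≠ 1 := by
      intro h1; rw [h1, one_mul] at hhe; exact hne hhe.symm
    have h2 := hg.2 (d'⁻¹ * d) (Finset.mem_insert_of_mem (Finset.mem_image.2
      ⟨(d', d), by simp [D', hd, hd'], rfl⟩)) h1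
    rw [← hhe, hh.1] at h2
    exact absurd h2 (by simp)
  · have hO : IsOpen (⋂ a ∈ A, {x : X | a • x ∈ U}) :=
      isOpen_biInter_finset fun a _ => hU.preimage (continuous_const_smul a)
    obtain ⟨_, hu, g, rfl⟩ := (hX x).inter_open_nonempty _ hO
      ⟨y, Set.mem_iInter₂.2 fun a ha => hAR a ha⟩
    obtain ⟨a, ha, hs⟩ := hz g
    refine ⟨a * g, hs, ?_⟩
    rw [mul_smul]
    exact Set.mem_iInter₂.1 hu a ha

end Helpers

/-- Let `G` be an infinite discrete group. Then the Bernoulli flow `2^G`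
is disjoint from every minimal `G`-flow. -/
theorem bernoulli_disjoint_from_every_minimal_flow
    (G : Type*) [Group G] [Infinite G]
    (X : Type*) [TopologicalSpace X] [CompactSpace X] [T2Space X] [Nonempty X]
    [MulAction G X] [ContinuousConstSMul G X]
    (hXmin : IsMinimalFlow G X) :
    FlowsDisjoint G X (G → Bool) := by
  exact disjoint_of_SCP (SCP_of_minimal hXmin)
end

section
/- Let G be an infinite discrete group. Then every minimal G-flow has the separated covering property: for every finite D ⊆ G and every nonempty open U ⊆ X there exists a D-separated S ⊆ G with S⁻¹U = X. -/
open Pointwise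

section Helpers

open Finset Classical

/-- Symmetric Lovász local lemma, counting form: inductive estimate. -/
lemma lll_step {α ι : Type*} (Ω : Finset α) (A : ι → α → Prop) (nbr : ι → Finset ι)
    (p : ℝ) (m : ℕ) (hp0 : 0 ≤ p) (hm : ∀ i, (nbr i).card ≤ m) (hpm : 4 * (m : ℝ) * p ≤ 1)
    (hind : ∀ i, ∀ T : Finset ι, (∀ j ∈ T, j ∉ nbr i) →
      ((Ω.filter (fun c => (∀ j ∈ T, ¬ A j c) ∧ A i c)).card : ℝ)
        ≤ p * ((Ω.filter (fun c => ∀ j ∈ T, ¬ A j c)).card : ℝ)) :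
    ∀ N : ℕ, ∀ T : Finset ι, T.card ≤ N → ∀ i,
      ((Ω.filter (fun c => (∀ j ∈ T, ¬ A j c) ∧ A i c)).card : ℝ)
        ≤ 2 * p * ((Ω.filter (fun c => ∀ j ∈ T, ¬ A j c)).card : ℝ) := by
  intro N
  induction N with
  | zero =>
    intro T hT i
    have hT0 : T = ∅ := Finset.card_eq_zero.mp (Nat.le_zero.mp hT)
    subst hT0
    refine (hind i ∅ (by simp)).trans ?_
    have : (0 : ℝ) ≤ p * ((Ω.filter (fun c => ∀ j ∈ (∅ : Finset ι), ¬ A j c)).card : ℝ) := by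
      positivity
    linarith
  | succ N ih =>
    intro T hT i
    set T1 := T.filter (fun j => j ∈ nbr i) with hT1
    set T2 := T.filter (fun j => j ∉ nbr i) with hT2
    have h1 : ((Ω.filter (fun c => (∀ j ∈ T, ¬ A j c) ∧ A i c)).card : ℝ)
        ≤ ((Ω.filter (fun c => (∀ j ∈ T2, ¬ A j c) ∧ A i c)).card : ℝ) := by
      norm_cast
      apply Finset.card_le_card
      intro c hc
      simp only [Finset.mem_filter] at hc ⊢
      exact ⟨hc.1, fun j hj => hc.2.1 j (Finset.mem_filter.mp hj).1, hc.2.2⟩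
    have h2 := hind i T2 (fun j hj => (Finset.mem_filter.mp hj).2)
    set b2 : ℝ := ((Ω.filter (fun c => ∀ j ∈ T2, ¬ A j c)).card : ℝ) with hb2
    have hb20 : 0 ≤ b2 := by positivity
    have h3 : b2 ≤ 2 * ((Ω.filter (fun c => ∀ j ∈ T, ¬ A j c)).card : ℝ) := by
      by_cases hne : T1 = ∅
      · have : T2 = T := by
          apply Finset.filter_true_of_mem
          intro j hj hjn
          have : j ∈ T1 := Finset.mem_filter.mpr ⟨hj, hjn⟩
          simp [hne] at this
        rw [hb2, this]
        have : (0 : ℝ) ≤ ((Ω.filter (fun c => ∀ j ∈ T, ¬ A j c)).card : ℝ) := by positivity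
        linarith
      · have hcard : T1.card + T2.card = T.card := Finset.card_filter_add_card_filter_not _
        have hpos : 0 < T1.card := Finset.card_pos.mpr (Finset.nonempty_iff_ne_empty.mpr hne)
        have hT2c : T2.card ≤ N := by omega
        have hsub : Ω.filter (fun c => ∀ j ∈ T2, ¬ A j c) ⊆
            Ω.filter (fun c => ∀ j ∈ T, ¬ A j c) ∪
            T1.biUnion (fun l => Ω.filter (fun c => (∀ j ∈ T2, ¬ A j c) ∧ A l c)) := by
          intro c hc
          simp only [Finset.mem_filter, Finset.mem_union, Finset.mem_biUnion] at hc ⊢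
          by_cases hall : ∀ j ∈ T, ¬ A j c
          · exact Or.inl ⟨hc.1, hall⟩
          · right
            push Not at hall
            obtain ⟨l, hl, hAl⟩ := hall
            refine ⟨l, ?_, hc.1, hc.2, hAl⟩
            by_contra hl1
            refine hc.2 l (Finset.mem_filter.mpr ⟨hl, fun h => hl1 ?_⟩) hAl
            exact Finset.mem_filter.mpr ⟨hl, h⟩
        have hle := (Finset.card_le_card hsub).trans (Finset.card_union_le _ _)
        have hle2 := hle.trans (Nat.add_le_add_left Finset.card_biUnion_le _)
        have hle3 : b2 ≤ ((Ω.filter (fun c => ∀ j ∈ T, ¬ A j c)).card : ℝ) +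
            ∑ l ∈ T1, ((Ω.filter (fun c => (∀ j ∈ T2, ¬ A j c) ∧ A l c)).card : ℝ) := by
          rw [hb2]; exact_mod_cast hle2
        have hsum : ∑ l ∈ T1, ((Ω.filter (fun c => (∀ j ∈ T2, ¬ A j c) ∧ A l c)).card : ℝ)
            ≤ ∑ _l ∈ T1, 2 * p * b2 := Finset.sum_le_sum (fun l _ => ih T2 hT2c l)
        rw [Finset.sum_const, nsmul_eq_mul] at hsum
        have hT1m : (T1.card : ℝ) ≤ m := by
          have : T1 ⊆ nbr i := fun j hj => (Finset.mem_filter.mp hj).2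
          exact_mod_cast (Finset.card_le_card this).trans (hm i)
        have h5 : (T1.card : ℝ) * (2 * p * b2) ≤ m * (2 * p * b2) := by gcongr
        have h6 : 4 * (m : ℝ) * p * b2 ≤ 1 * b2 := by gcongr
        linarith
    calc _ ≤ p * b2 := h1.trans h2
      _ ≤ p * (2 * ((Ω.filter (fun c => ∀ j ∈ T, ¬ A j c)).card : ℝ)) := by gcongr
      _ = _ := by ring

lemma lll {α ι : Type*} (Ω : Finset α) (hΩ : Ω.Nonempty)
    (A : ι → α → Prop) (nbr : ι → Finset ι)
    (p : ℝ) (m : ℕ) (hp0 : 0 ≤ p) (hm : ∀ i, (nbr i).card ≤ m) (hpm : 4 * (m : ℝ) * p ≤ 1)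
    (hp4 : p ≤ 1 / 4)
    (K : Finset ι)
    (hind : ∀ i, ∀ T : Finset ι, (∀ j ∈ T, j ∉ nbr i) → 
      ((Ω.filter (fun c => (∀ j ∈ T, ¬ A j c) ∧ A i c)).card : ℝ)
        ≤ p * ((Ω.filter (fun c => ∀ j ∈ T, ¬ A j c)).card : ℝ)) :
    ∃ c ∈ Ω, ∀ j ∈ K, ¬ A j c := by
  suffices h : (0 : ℝ) < ((Ω.filter (fun c => ∀ j ∈ K, ¬ A j c)).card : ℝ) by
    have h' : 0 < (Ω.filter (fun c => ∀ j ∈ K, ¬ A j c)).card := by exact_mod_cast h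
    obtain ⟨c, hc⟩ := Finset.card_pos.mp h'
    exact ⟨c, (Finset.mem_filter.mp hc).1, (Finset.mem_filter.mp hc).2⟩
  induction K using Finset.induction_on with
  | empty => simpa using Finset.card_pos.mpr hΩ
  | insert i T _ ih =>
    have h1 := lll_step Ω A nbr p m hp0 hm hpm hind T.card T le_rfl i
    have hsub : Ω.filter (fun c => ∀ j ∈ T, ¬ A j c) ⊆
        Ω.filter (fun c => ∀ j ∈ insert i T, ¬ A j c) ∪
        Ω.filter (fun c => (∀ j ∈ T, ¬ A j c) ∧ A i c) := by
      intro c hc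
      simp only [Finset.mem_filter, Finset.mem_union, Finset.mem_insert] at hc ⊢
      by_cases hA : A i c
      · exact Or.inr ⟨hc.1, hc.2, hA⟩
      · refine Or.inl ⟨hc.1, ?_⟩
        rintro j (rfl | hj)
        · exact hA
        · exact hc.2 j hj
    have hle := (Finset.card_le_card hsub).trans (Finset.card_union_le _ _)
    have hle' : ((Ω.filter (fun c => ∀ j ∈ T, ¬ A j c)).card : ℝ) ≤
        ((Ω.filter (fun c => ∀ j ∈ insert i T, ¬ A j c)).card : ℝ) +
        ((Ω.filter (fun c => (∀ j ∈ T, ¬ A j c) ∧ A i c)).card : ℝ) := by exact_mod_cast hle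
    nlinarith

/-- One-block estimate. -/
lemma block_one {V : Type*} (W Y : Finset V) (y : V) (d : ℕ) (hY : Y ⊆ W) (hy : y ∈ Y)
    (hd : Y.card ≤ d) (P : Finset V → Prop)
    (hP : ∀ c c' : Finset V, c \ Y = c' \ Y → P c → P c') :
    ((W.powerset.filter (fun c => P c ∧ c ∩ Y ≠ {y})).card : ℝ)
      ≤ (1 - (1 / 2) ^ d) * ((W.powerset.filter P).card : ℝ) := by
  have h1 : (W.powerset.filter P).card ≤
      2 ^ d * (W.powerset.filter (fun c => P c ∧ c ∩ Y = {y})).card := by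
    apply Finset.card_le_mul_card_image_of_maps_to (f := fun c => (c \ Y) ∪ {y})
    · intro c hc
      simp only [Finset.mem_coe, Finset.mem_filter, Finset.mem_powerset] at hc ⊢
      refine ⟨?_, hP c _ ?_ hc.2, ?_⟩
      · intro z hz
        simp only [Finset.mem_union, Finset.mem_sdiff, Finset.mem_singleton] at hz
        rcases hz with hz | rfl
        · exact hc.1 hz.1
        · exact hY hy
      · ext z
        simp only [Finset.mem_union, Finset.mem_sdiff, Finset.mem_singleton]
        constructor
        · intro h; exact ⟨Or.inl h, h.2⟩
        · rintro ⟨h | rfl, h2⟩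
          · exact h
          · exact absurd hy h2
      · ext z
        simp only [Finset.mem_union, Finset.mem_sdiff, Finset.mem_singleton, Finset.mem_inter]
        constructor
        · rintro ⟨h | h, h2⟩
          · exact absurd h2 h.2
          · exact h
        · rintro rfl; exact ⟨Or.inr rfl, hy⟩
    · intro c0 _
      have hc : (Y.powerset).card ≤ 2 ^ d := by
        rw [Finset.card_powerset]; exact Nat.pow_le_pow_right (by norm_num) hd
      refine le_trans ?_ hc
      apply Finset.card_le_card_of_injOn (fun c => c ∩ Y)
      · intro c _
        simp
      · intro c hc c' hc' heq
        simp only [Finset.mem_coe, Finset.mem_filter] at hc hc'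
        have e1 : c \ Y ∪ {y} = c' \ Y ∪ {y} := hc.2.trans hc'.2.symm
        have heq' : c ∩ Y = c' ∩ Y := heq
        ext z
        by_cases hz : z ∈ Y
        · have := congrArg (fun s => z ∈ s) heq'
          simpa [hz] using this
        · have hzy : z ≠ y := fun h => hz (h ▸ hy)
          have := congrArg (fun s => z ∈ s) e1
          simpa [hz, hzy] using this
  have h2 : (W.powerset.filter (fun c => P c ∧ c ∩ Y = {y})).card +
      (W.powerset.filter (fun c => P c ∧ c ∩ Y ≠ {y})).card = (W.powerset.filter P).card := by
    rw [← Finset.filter_filter, ← Finset.filter_filter]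
    exact Finset.card_filter_add_card_filter_not _
  have h1' : ((W.powerset.filter P).card : ℝ) ≤
      2 ^ d * ((W.powerset.filter (fun c => P c ∧ c ∩ Y = {y})).card : ℝ) := by exact_mod_cast h1
  have h2' : ((W.powerset.filter (fun c => P c ∧ c ∩ Y = {y})).card : ℝ) +
      ((W.powerset.filter (fun c => P c ∧ c ∩ Y ≠ {y})).card : ℝ)
        = ((W.powerset.filter P).card : ℝ) := by exact_mod_cast h2
  have h3 : ((1 : ℝ) / 2) ^ d * ((W.powerset.filter P).card : ℝ) ≤
      ((W.powerset.filter (fun c => P c ∧ c ∩ Y = {y})).card : ℝ) := by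
    rw [one_div, inv_pow]
    rw [inv_mul_le_iff₀ (by positivity)]
    exact h1'
  linarith

lemma block_many {V J : Type*} (W : Finset V) (Y : J → Finset V) (y : J → V) (d : ℕ)
    (hy : ∀ f, y f ∈ Y f) (hd : ∀ f, (Y f).card ≤ d) (P : Finset V → Prop) (F : Finset J)
    (hY : ∀ f ∈ F, Y f ⊆ W)
    (hdis : ∀ f ∈ F, ∀ g ∈ F, f ≠ g → Disjoint (Y f) (Y g))
    (hP : ∀ f ∈ F, ∀ c c' : Finset V, c \ Y f = c' \ Y f → P c → P c') :
    ((W.powerset.filter (fun c => P c ∧ ∀ f ∈ F, c ∩ Y f ≠ {y f})).card : ℝ)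
      ≤ (1 - (1 / 2) ^ d) ^ F.card * ((W.powerset.filter P).card : ℝ) := by
  induction F using Finset.induction_on with
  | empty => simp
  | insert a F ha ih =>
    have ih' := ih (fun f hf => hY f (Finset.mem_insert_of_mem hf))
      (fun f hf g hg => hdis f (Finset.mem_insert_of_mem hf) g (Finset.mem_insert_of_mem hg))
      (fun f hf => hP f (Finset.mem_insert_of_mem hf))
    have hb := block_one W (Y a) (y a) d (hY a (Finset.mem_insert_self _ _)) (hy a) (hd a)
      (fun c => P c ∧ ∀ f ∈ F, c ∩ Y f ≠ {y f}) (by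
        rintro c c' hcc ⟨h1, h2⟩
        refine ⟨hP a (Finset.mem_insert_self _ _) c c' hcc h1, fun f hf => ?_⟩
        have hne : f ≠ a := fun h => ha (h ▸ hf)
        have hD := hdis f (Finset.mem_insert_of_mem hf) a (Finset.mem_insert_self _ _) hne
        have : c' ∩ Y f = c ∩ Y f := by
          ext z
          by_cases hz : z ∈ Y f
          · have hz2 : z ∉ Y a := Finset.disjoint_left.mp hD hz
            have := congrArg (fun s => z ∈ s) hcc
            simp [hz2] at this
            simp [this]
          · simp [hz]
        rw [this]; exact h2 f hf)
    have heq : W.powerset.filter (fun c => P c ∧ ∀ f ∈ insert a F, c ∩ Y f ≠ {y f}) =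
        W.powerset.filter (fun c => (P c ∧ ∀ f ∈ F, c ∩ Y f ≠ {y f}) ∧ c ∩ Y a ≠ {y a}) := by
      apply Finset.filter_congr
      intro c _
      rw [Finset.forall_mem_insert]
      tauto
    rw [heq, Finset.card_insert_of_notMem ha, pow_succ]
    have h0 : (0 : ℝ) ≤ 1 - (1 / 2) ^ d := by
      have : ((1 : ℝ) / 2) ^ d ≤ 1 := pow_le_one₀ (by norm_num) (by norm_num)
      linarith
    calc _ ≤ (1 - (1 / 2 : ℝ) ^ d) * ((W.powerset.filter
          (fun c => P c ∧ ∀ f ∈ F, c ∩ Y f ≠ {y f})).card : ℝ) := by convert hb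
      _ ≤ (1 - (1 / 2 : ℝ) ^ d) * ((1 - (1 / 2) ^ d) ^ F.card *
          ((W.powerset.filter P).card : ℝ)) := by gcongr
      _ = _ := by ring

lemma exists_n (d : ℕ) : ∃ n : ℕ, 1 ≤ n ∧
    4 * (((d * n) * (d * n) : ℕ) : ℝ) * (1 - (1 / 2) ^ d) ^ n ≤ 1 := by
  have hr : |(1 - (1 / 2 : ℝ) ^ d)| < 1 := by
    have h1 : ((1 : ℝ) / 2) ^ d ≤ 1 := pow_le_one₀ (by norm_num) (by norm_num)
    have h2 : (0 : ℝ) < (1 / 2) ^ d := by positivity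
    rw [abs_lt]; constructor <;> linarith
  have ht := (tendsto_pow_const_mul_const_pow_of_abs_lt_one 2 hr).const_mul (4 * (d : ℝ) ^ 2)
  rw [mul_zero] at ht
  have := (ht.eventually (gt_mem_nhds (zero_lt_one))).and (Filter.eventually_ge_atTop 1)
  obtain ⟨n, hn, hn1⟩ := this.exists
  refine ⟨n, hn1, le_of_eq_of_le ?_ hn.le⟩
  push_cast
  ring

/-- Combinatorial core: for large `E`-separated `F` and any finite `K`. -/
lemma exists_sep {G : Type*} [Group G] (E F K : Finset G) (hE : (1 : G) ∈ E) (hF1 : 1 ≤ F.card)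
    (hF : ∀ f ∈ F, ∀ g ∈ F, f ≠ g → ∀ e ∈ E, ∀ e' ∈ E, e * f ≠ e' * g)
    (hn : 4 * (((E.card * F.card) * (E.card * F.card) : ℕ) : ℝ) *
      (1 - (1 / 2) ^ E.card) ^ F.card ≤ 1) :
    ∃ c : Finset G, ∀ k ∈ K, ∃ f ∈ F, c ∩ E.image (fun e => e * (f * k)) = {f * k} := by
  set Y : G → G → Finset G := fun k f => E.image (fun e => e * (f * k)) with hYdef
  have hp0 : (0 : ℝ) ≤ 1 - (1 / 2) ^ E.card := by
    have : ((1 : ℝ) / 2) ^ E.card ≤ 1 := pow_le_one₀ (by norm_num) (by norm_num)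
    linarith
  have hE1 : 1 ≤ E.card := Finset.card_pos.mpr ⟨1, hE⟩
  set p : ℝ := (1 - (1 / 2) ^ E.card) ^ F.card with hp
  have hpp : 0 ≤ p := pow_nonneg hp0 _
  set m := (E.card * F.card) * (E.card * F.card) with hmdef
  have hm1 : 1 ≤ m := Nat.mul_pos (Nat.mul_pos hE1 hF1) (Nat.mul_pos hE1 hF1)
  have hm1' : (1 : ℝ) ≤ m := by exact_mod_cast hm1
  have hp4 : p ≤ 1 / 4 := by nlinarith
  set Z : Finset G := E * F with hZ
  have hZc : Z.card ≤ E.card * F.card := Finset.card_mul_le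
  -- restrict indices to `K`
  set nbr : K → Finset K := fun i =>
    Finset.univ.filter (fun j : K => (j : G) ∈ (Z⁻¹ * Z) * {(i : G)}) with hnbr
  have hmn : ∀ i, (nbr i).card ≤ m := by
    intro i
    have h1 : (nbr i).card ≤ ((Z⁻¹ * Z) * {(i : G)}).card := by
      apply Finset.card_le_card_of_injOn (fun j : K => (j : G))
      · intro j hj
        exact (Finset.mem_filter.mp hj).2
      · intro a _ b _ h
        exact Subtype.ext h
    have h2 : ((Z⁻¹ * Z) * {(i : G)}).card ≤ (Z⁻¹ * Z).card * 1 := Finset.card_mul_le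
    have h3 : (Z⁻¹ * Z).card ≤ Z⁻¹.card * Z.card := Finset.card_mul_le
    rw [Finset.card_inv] at h3
    have h4 := Nat.mul_le_mul hZc hZc
    omega
  obtain ⟨c, -, hc⟩ := lll (Z * K).powerset ⟨∅, by simp⟩
    (fun (k : K) c => ∀ f ∈ F, c ∩ Y k f ≠ {f * (k : G)}) nbr p m hpp hmn hn hp4 Finset.univ (by
      intro i T hT
      have hbm := block_many (Z * K) (Y i) (fun f => f * (i : G)) E.card ?_ ?_
        (fun c => ∀ j ∈ T, ¬ ∀ f ∈ F, c ∩ Y j f ≠ {f * (j : G)}) F ?_ ?_ ?_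
      · convert hbm
      · intro f
        exact Finset.mem_image.mpr ⟨1, hE, one_mul _⟩
      · intro f
        exact Finset.card_image_le
      · intro f hf z hz
        obtain ⟨e, he, rfl⟩ := Finset.mem_image.mp hz
        rw [← mul_assoc]
        exact Finset.mul_mem_mul (Finset.mul_mem_mul he hf) i.2
      · intro f hf g hg hfg
        rw [Finset.disjoint_left]
        intro z hz hz'
        obtain ⟨e, he, rfl⟩ := Finset.mem_image.mp hz
        obtain ⟨e', he', h⟩ := Finset.mem_image.mp hz'
        refine hF f hf g hg hfg e he e' he' ?_
        simp only [← mul_assoc] at h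
        exact (mul_right_cancel h).symm
      · intro f hf c c' hcc hP j hj hA
        refine hP j hj (fun g hg => ?_)
        have hD : ∀ z ∈ Y j g, z ∉ Y i f := by
          intro z hz hz'
          obtain ⟨e, he, rfl⟩ := Finset.mem_image.mp hz
          obtain ⟨e', he', h⟩ := Finset.mem_image.mp hz'
          apply hT j hj
          refine Finset.mem_filter.mpr ⟨Finset.mem_univ _, ?_⟩
          have : (j : G) = ((e * g)⁻¹ * (e' * f)) * (i : G) := by
            rw [mul_assoc, eq_inv_mul_iff_mul_eq]
            simp only [← mul_assoc] at h ⊢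
            exact h.symm
          rw [this]
          exact Finset.mul_mem_mul (Finset.mul_mem_mul
            (Finset.inv_mem_inv (Finset.mul_mem_mul he hg)) (Finset.mul_mem_mul he' hf))
            (Finset.mem_singleton_self _)
        have : c ∩ Y j g = c' ∩ Y j g := by
          ext z
          by_cases hz : z ∈ Y j g
          · have hz2 := hD z hz
            have := congrArg (fun s => z ∈ s) hcc
            simp [hz2] at this
            simp [this]
          · simp [hz]
        rw [this]; exact hA g hg)
  refine ⟨c, fun k hk => ?_⟩
  have := hc ⟨k, hk⟩ (Finset.mem_univ _)
  push Not at this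
  exact this

lemma exists_sparse_s1 {G : Type*} [Group G] (E : Finset G) (V : Set G) (hV : V.Infinite) (n : ℕ) :
    ∃ F : Finset G, F.card = n ∧ (F : Set G) ⊆ V ∧
      ∀ f ∈ F, ∀ g ∈ F, f ≠ g → ∀ e ∈ E, ∀ e' ∈ E, e * f ≠ e' * g := by
  induction n with
  | zero => exact ⟨∅, by simp⟩
  | succ n ih =>
    obtain ⟨F, hFc, hFV, hF⟩ := ih
    obtain ⟨a, haV, ha⟩ := hV.exists_notMem_finset (F ∪ (E⁻¹ * E) * F)
    rw [Finset.mem_union, not_or] at ha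
    have key : ∀ g ∈ F, ∀ e ∈ E, ∀ e' ∈ E, e * a ≠ e' * g := by
      intro g hg e he e' he' h
      apply ha.2
      have : a = (e⁻¹ * e') * g := by rw [mul_assoc, ← h, inv_mul_cancel_left]
      rw [this]
      exact Finset.mul_mem_mul (Finset.mul_mem_mul (Finset.inv_mem_inv he) he') hg
    refine ⟨insert a F, by rw [Finset.card_insert_of_notMem ha.1, hFc], ?_, ?_⟩
    · intro z hz
      rcases Finset.mem_insert.mp hz with rfl | hz
      · exact haV
      · exact hFV hz
    · intro f hf g hg hfg e he e' he'
      rcases Finset.mem_insert.mp hf with hfa | hf' <;>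
        rcases Finset.mem_insert.mp hg with hga | hg'
      · exact absurd (hfa.trans hga.symm) hfg
      · rw [hfa]; exact key g hg' e he e' he'
      · rw [hga]; exact fun h => key f hf' e' he' e he h.symm
      · exact hF f hf' g hg' hfg e he e' he'

lemma finite_return {G X : Type*} [Group G] [TopologicalSpace X] [CompactSpace X]
    [MulAction G X] [ContinuousConstSMul G X] (hX : IsMinimalFlow G X)
    (U : Set X) (hU : IsOpen U) (hne : U.Nonempty) :
    ∃ K : Finset G, ∀ x : X, ∃ k ∈ K, k • x ∈ U := by
  obtain ⟨K, hK⟩ := isCompact_univ.elim_finite_subcover (fun g : G => (fun x : X => g • x) ⁻¹' U)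
    (fun g => hU.preimage (continuous_const_smul g)) (by
      intro x _
      obtain ⟨y, hyU, g, rfl⟩ := (hX x).inter_open_nonempty U hU hne
      exact Set.mem_iUnion.mpr ⟨g, hyU⟩)
  refine ⟨K, fun x => ?_⟩
  have := hK (Set.mem_univ x)
  simpa using this

end Helpers

/-- Let `G` be an infinite discrete group. Then every minimal `G`-flow
has the separated covering property. -/
theorem every_minimal_flow_has_SCP
    (G : Type*) [Group G] [Infinite G]
    (X : Type*) [TopologicalSpace X] [CompactSpace X] [T2Space X] [Nonempty X]
    [MulAction G X] [ContinuousConstSMul G X]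
    (hXmin : IsMinimalFlow G X) :
    SCP G X := by
  classical
  intro D hD U hU hne
  obtain ⟨K0, hK0⟩ := finite_return hXmin U hU hne
  obtain ⟨x0⟩ := ‹Nonempty X›
  have hVinf : {g : G | g • x0 ∈ U}.Infinite := by
    intro hfin
    have hsub : (Set.univ : Set G) ⊆ (K0 : Set G)⁻¹ * {g : G | g • x0 ∈ U} := by
      intro h _
      obtain ⟨k, hk, hkU⟩ := hK0 (h • x0)
      refine Set.mem_mul.mpr ⟨k⁻¹, Set.inv_mem_inv.mpr hk, k * h, ?_, by group⟩
      show (k * h) • x0 ∈ U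
      rw [mul_smul]; exact hkU
    exact Set.infinite_univ ((K0.finite_toSet.inv.mul hfin).subset hsub)
  set E : Finset G := insert 1 (hD.toFinset⁻¹ * hD.toFinset) with hE
  obtain ⟨n, hn1, hn⟩ := exists_n E.card
  obtain ⟨F, hFc, hFV, hF⟩ := exists_sparse_s1 E _ hVinf n
  have hO : IsOpen (⋂ f ∈ F, (fun x : X => f • x) ⁻¹' U) :=
    isOpen_biInter_finset (fun f _ => hU.preimage (continuous_const_smul f))
  obtain ⟨K, hK⟩ := finite_return hXmin _ hO
    ⟨x0, Set.mem_iInter₂.mpr (fun f hf => hFV hf)⟩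
  obtain ⟨c, hc⟩ := exists_sep E F K (Finset.mem_insert_self _ _) (by omega) hF
    (by rw [hFc]; exact hn)
  refine ⟨{g | c ∩ E.image (fun e => e * g) = {g}}, ?_, ?_⟩
  · intro g hg h hh hgh
    rw [Set.disjoint_left]
    rintro z hz hz'
    rw [Set.mul_singleton] at hz hz'
    obtain ⟨d, hd, rfl⟩ := hz
    obtain ⟨d', hd', hdd⟩ := hz'
    apply hgh
    have hgc : g ∈ c := by
      have : g ∈ c ∩ E.image (fun e => e * g) := by
        rw [show c ∩ E.image (fun e => e * g) = {g} from hg]; simp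
      exact (Finset.mem_inter.mp this).1
    have : g ∈ c ∩ E.image (fun e => e * h) := by
      refine Finset.mem_inter.mpr ⟨hgc, Finset.mem_image.mpr ⟨d⁻¹ * d', ?_, ?_⟩⟩
      · exact Finset.mem_insert_of_mem (Finset.mul_mem_mul
          (Finset.inv_mem_inv (hD.mem_toFinset.mpr hd)) (hD.mem_toFinset.mpr hd'))
      · have hdd' : d' * h = d * g := hdd
        rw [mul_assoc, hdd', inv_mul_cancel_left]
    rw [show c ∩ E.image (fun e => e * h) = {h} from hh] at this
    exact Finset.mem_singleton.mp this
  · intro x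
    obtain ⟨k, hk, hkx⟩ := hK x
    obtain ⟨f, hf, hfk⟩ := hc k hk
    refine ⟨f * k, hfk, ?_⟩
    rw [mul_smul]
    exact Set.mem_iInter₂.mp hkx f hf
end

section
/- Let G be an infinite discrete group. Then the closed subalgebra 𝔄(G) of ℓ∞(G) generated by the minimal functions is a proper subalgebra: 𝔄(G) ≠ ℓ∞(G). -/
open scoped ENNReal

universe u

/-- A bounded function `φ : G → ℝ` is a minimal function if there are a minimal `G`-flow
`X` (a compact Hausdorff space with a `G`-action by homeomorphisms in which every orbit is
dense), a point `x₀ ∈ X` and a continuous `f : X → ℝ` with `φ g = f (g • x₀)` for all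
`g`. -/
def IsMinimalFunction {G : Type u} [Group G] (φ : G → ℝ) : Prop :=
  ∃ (X : Type u) (_ : TopologicalSpace X) (_ : CompactSpace X) (_ : T2Space X)
    (_ : MulAction G X) (_ : ContinuousConstSMul G X),
    (∀ x : X, Dense (MulAction.orbit G x)) ∧
    ∃ (x₀ : X) (f : C(X, ℝ)), ∀ g : G, φ g = f (g • x₀)

namespace MinFun
open Finset
section Count
open scoped Classical

noncomputable def good {α ι : Type*} (e : ι → Finset α) (Bad : ι → Finset α → Prop)
    (V : Finset α) : Finset (Finset α) :=
  V.powerset.filter (fun A => ∀ i, e i ⊆ V → ¬ Bad i (A ∩ e i))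

theorem good_step {α ι : Type*} (e : ι → Finset α) (Bad : ι → Finset α → Prop)
    (b : ℕ) (hb : ∀ i, ((e i).powerset.filter (Bad i)).card ≤ b)
    (V : Finset α) (v : α) (hv : v ∉ V) (I : Finset ι) (hI : ∀ i, v ∈ e i → i ∈ I) :
    2 * (good e Bad V).card ≤ (good e Bad (insert v V)).card +
      ∑ i ∈ I.filter (fun i => v ∈ e i ∧ e i ⊆ insert v V), (good e Bad (V \ e i)).card * b := by
  set J := I.filter (fun i => v ∈ e i ∧ e i ⊆ insert v V) with hJ
  set P : Finset (Finset α) := (insert v V).powerset.filter (fun A => A.erase v ∈ good e Bad V)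
    with hP
  have h1 : 2 * (good e Bad V).card ≤ P.card := by
    have hsub : good e Bad V ∪ (good e Bad V).image (insert v) ⊆ P := by
      intro A hA
      rw [mem_union, mem_image] at hA
      rcases hA with hA | ⟨B, hB, rfl⟩
      · have hAV : A ⊆ V := by
          have := (mem_filter.1 hA).1
          exact mem_powerset.1 this
        have : A.erase v = A := erase_eq_of_notMem (fun h => hv (hAV h))
        rw [hP, mem_filter, this, mem_powerset]
        exact ⟨hAV.trans (subset_insert _ _), hA⟩
      · have hAV : B ⊆ V := by
          have := (mem_filter.1 hB).1
          exact mem_powerset.1 this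
        rw [hP, mem_filter, mem_powerset, erase_insert (fun h => hv (hAV h))]
        exact ⟨insert_subset_insert _ hAV, hB⟩
    have hdis : Disjoint (good e Bad V) ((good e Bad V).image (insert v)) := by
      rw [Finset.disjoint_left]
      intro A hA hA'
      obtain ⟨B, hB, rfl⟩ := mem_image.1 hA'
      exact hv (mem_powerset.1 (mem_filter.1 hA).1 (mem_insert_self _ _))
    have hinj : ((good e Bad V).image (insert v)).card = (good e Bad V).card := by
      apply card_image_of_injOn
      intro A hA B hB hAB
      have hA' : v ∉ A := fun h => hv (mem_powerset.1 (mem_filter.1 hA).1 h)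
      have hB' : v ∉ B := fun h => hv (mem_powerset.1 (mem_filter.1 hB).1 h)
      have := congrArg (fun C => C.erase v) hAB
      simpa [erase_insert hA', erase_insert hB'] using this
    have := card_le_card hsub
    rw [card_union_of_disjoint hdis, hinj] at this
    omega
  have h2 : P ⊆ good e Bad (insert v V) ∪
      J.biUnion (fun i => P.filter (fun A => Bad i (A ∩ e i))) := by
    intro A hA
    rw [mem_union, mem_biUnion]
    by_cases h : A ∈ good e Bad (insert v V)
    · exact Or.inl h
    right
    have hAP := (mem_filter.1 hA)
    have : ∃ i, e i ⊆ insert v V ∧ Bad i (A ∩ e i) := by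
      by_contra hcon
      push Not at hcon
      exact h (mem_filter.2 ⟨hAP.1, hcon⟩)
    obtain ⟨i, hi, hbad⟩ := this
    have hvi : v ∈ e i := by
      by_contra hvi
      have hsub : e i ⊆ V := fun x hx => by
        rcases mem_insert.1 (hi hx) with rfl | h
        · exact absurd hx hvi
        · exact h
      have := (mem_filter.1 hAP.2).2 i hsub
      apply this
      have : A.erase v ∩ e i = A ∩ e i := by
        ext x; simp only [mem_inter, mem_erase]
        constructor
        · tauto
        · rintro ⟨ha, hb⟩
          exact ⟨⟨fun h => hvi (h ▸ hb), ha⟩, hb⟩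
      rwa [this]
    exact ⟨i, mem_filter.2 ⟨hI i hvi, hvi, hi⟩, mem_filter.2 ⟨hA, hbad⟩⟩
  have h3 : ∀ i ∈ J, (P.filter (fun A => Bad i (A ∩ e i))).card ≤
      (good e Bad (V \ e i)).card * b := by
    intro i hi
    have hi' := (mem_filter.1 hi).2
    calc _ ≤ ((good e Bad (V \ e i)) ×ˢ ((e i).powerset.filter (Bad i))).card := by
          apply card_le_card_of_injOn (fun A => (A \ e i, A ∩ e i))
          · intro A hA
            have hA := mem_filter.1 hA
            have hAP := mem_filter.1 hA.1
            have hAV := mem_powerset.1 hAP.1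
            simp only [coe_product, Set.mem_prod, mem_coe]
            refine ⟨mem_filter.2 ⟨mem_powerset.2 ?_, ?_⟩,
              mem_filter.2 ⟨mem_powerset.2 inter_subset_right, hA.2⟩⟩
            · intro x hx
              rw [mem_sdiff] at hx ⊢
              refine ⟨?_, hx.2⟩
              rcases mem_insert.1 (hAV hx.1) with rfl | h
              · exact absurd hi'.1 hx.2
              · exact h
            · intro j hj
              have := (mem_filter.1 hAP.2).2 j (hj.trans sdiff_subset)
              have heq : A.erase v ∩ e j = A \ e i ∩ e j := by
                ext x; simp only [mem_inter, mem_erase, mem_sdiff]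
                constructor
                · rintro ⟨⟨_, h⟩, hb⟩
                  exact ⟨⟨h, (mem_sdiff.1 (hj hb)).2⟩, hb⟩
                · rintro ⟨⟨h, _⟩, hb⟩
                  exact ⟨⟨fun h => hv (h ▸ (mem_sdiff.1 (hj hb)).1), h⟩, hb⟩
              rwa [heq] at this
          · intro A _ B _ hAB
            simp only [Prod.mk.injEq] at hAB
            rw [← sdiff_union_inter A (e i), hAB.1, hAB.2, sdiff_union_inter]
      _ ≤ _ := by
          rw [card_product]
          exact Nat.mul_le_mul_left _ (hb i)
  calc _ ≤ P.card := h1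
    _ ≤ _ := card_le_card h2
    _ ≤ _ := card_union_le _ _
    _ ≤ _ := by
      gcongr
      exact card_biUnion_le.trans (sum_le_sum h3)

theorem good_growth {α ι : Type*} (e : ι → Finset α) (Bad : ι → Finset α → Prop)
    (b n Δ : ℕ) (hb : ∀ i, ((e i).powerset.filter (Bad i)).card ≤ b)
    (hn : ∀ i, (e i).card = n)
    (hΔ : ∀ v, ∃ I : Finset ι, I.card ≤ Δ ∧ ∀ i, v ∈ e i → i ∈ I)
    (β : ℝ) (hβ : 0 < β) (hβ2 : (Δ : ℝ) * b ≤ (2 - β) * β ^ (n - 1)) :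
    ∀ k : ℕ, ∀ V : Finset α, V.card = k → ∀ U ⊆ V,
      ((good e Bad (V \ U)).card : ℝ) * β ^ U.card ≤ (good e Bad V).card := by
  intro k
  induction k using Nat.strong_induction_on with
  | _ k ih =>
  intro V hV U hU
  rcases U.eq_empty_or_nonempty with rfl | ⟨v, hvU⟩
  · simp
  have hvV := hU hvU
  set V0 := V.erase v with hV0
  have hins : insert v V0 = V := insert_erase hvV
  have hv0 : v ∉ V0 := notMem_erase _ _
  have hc0 : V0.card < k := by rw [← hV]; exact card_erase_lt_of_mem hvV
  have ih0 := ih V0.card hc0 V0 rfl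
  have e1 : V \ U = V0 \ (U.erase v) := by
    ext x; simp only [hV0, mem_sdiff, mem_erase]
    by_cases hx : x = v
    · subst hx; tauto
    · tauto
  have i1 := ih0 (U.erase v) (erase_subset_erase _ hU)
  rw [← e1] at i1
  have hcard : U.card = (U.erase v).card + 1 := (card_erase_add_one hvU).symm
  obtain ⟨I, hIc, hI⟩ := hΔ v
  have step := good_step e Bad b hb V0 v hv0 I hI
  rw [hins] at step
  set N0 : ℝ := ((good e Bad V0).card : ℝ) with hN0
  have hbd : ∀ i ∈ I.filter (fun i => v ∈ e i ∧ e i ⊆ V),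
      ((good e Bad (V0 \ e i)).card : ℝ) * b ≤ N0 / β ^ (n-1) * b := by
    intro i hi
    have hi' := (mem_filter.1 hi).2
    gcongr
    rw [le_div_iff₀ (by positivity)]
    have := ih0 ((e i).erase v) (erase_subset_erase _ hi'.2)
    have e2 : V0 \ (e i).erase v = V0 \ e i := by
      ext x; simp only [hV0, mem_sdiff, mem_erase]; tauto
    rwa [e2, card_erase_of_mem hi'.1, hn i] at this
  have hsum : (∑ i ∈ I.filter (fun i => v ∈ e i ∧ e i ⊆ V),
      ((good e Bad (V0 \ e i)).card : ℝ) * b) ≤ Δ * (N0 / β ^ (n-1) * b) := by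
    refine (sum_le_sum hbd).trans ?_
    rw [sum_const, nsmul_eq_mul]
    gcongr
    exact (card_filter_le _ _).trans hIc
  have step' : (2:ℝ) * N0 ≤ (good e Bad V).card + Δ * (N0 / β ^ (n-1) * b) := by
    refine le_trans ?_ (add_le_add_right hsum _)
    rw [hN0]
    exact_mod_cast step
  have h4 : (Δ:ℝ) * (N0 / β ^ (n-1) * b) ≤ (2 - β) * N0 := by
    have : (Δ:ℝ) * (N0 / β ^ (n-1) * b) = N0 * ((Δ * b) / β ^ (n-1)) := by ring
    rw [this, mul_comm (2-β)]
    gcongr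
    rw [div_le_iff₀ (by positivity)]
    exact hβ2
  have h5 : β * N0 ≤ (good e Bad V).card := by linarith
  calc _ = ((good e Bad (V \ U)).card : ℝ) * β ^ (U.erase v).card * β := by
        rw [hcard, pow_succ]; ring
    _ ≤ N0 * β := by gcongr
    _ ≤ _ := by linarith

theorem exists_good {α ι : Type*} (e : ι → Finset α) (Bad : ι → Finset α → Prop)
    (b n Δ : ℕ) (hb : ∀ i, ((e i).powerset.filter (Bad i)).card ≤ b)
    (hn : ∀ i, (e i).card = n) (hn0 : 0 < n)
    (hΔ : ∀ v, ∃ I : Finset ι, I.card ≤ Δ ∧ ∀ i, v ∈ e i → i ∈ I)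
    (β : ℝ) (hβ : 0 < β) (hβ2 : (Δ : ℝ) * b ≤ (2 - β) * β ^ (n - 1)) (V : Finset α) :
    ∃ A : Finset α, ∀ i, e i ⊆ V → ¬ Bad i (A ∩ e i) := by
  have h := good_growth e Bad b n Δ hb hn hΔ β hβ hβ2 _ V rfl V subset_rfl
  have h0 : ∅ ∈ good e Bad (V \ V) := by
    refine mem_filter.2 ⟨by simp, ?_⟩
    intro i hi
    have h' := hn i
    rw [sdiff_self] at hi
    have h2 : e i = ∅ := subset_empty.1 hi
    rw [h2, card_empty] at h'
    omega
  have h1 : 0 < (good e Bad (V \ V)).card := card_pos.2 ⟨_, h0⟩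
  have h2 : (0:ℝ) < (good e Bad V).card := lt_of_lt_of_le (by positivity) h
  have h3 : 0 < (good e Bad V).card := by exact_mod_cast h2
  obtain ⟨A, hA⟩ := card_pos.1 h3
  exact ⟨A, (mem_filter.1 hA).2⟩
end Count

theorem exists_params (s : ℕ) : ∃ (β : ℝ) (r : ℕ), 0 < β ∧ 0 < r ∧
    ((s * r : ℕ) : ℝ) * ((2 ^ s - 1) ^ r : ℕ) ≤ (2 - β) * β ^ (s * r - 1) := by
  have hc : ContinuousAt (fun x : ℝ => x ^ s) 2 := by fun_prop
  have h1 : ∀ᶠ x in nhdsWithin (2:ℝ) (Set.Iio 2), (2:ℝ) ^ s - 1 < x ^ s :=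
    (hc.continuousWithinAt).eventually (lt_mem_nhds (by linarith))
  have h2 : ∀ᶠ x in nhdsWithin (2:ℝ) (Set.Iio 2), x < 2 := eventually_mem_nhdsWithin
  have h3 : ∀ᶠ x in nhdsWithin (2:ℝ) (Set.Iio 2), 0 < x :=
    Filter.Eventually.filter_mono nhdsWithin_le_nhds (lt_mem_nhds (by norm_num))
  obtain ⟨β, hb1, hb2, hb3⟩ := (h1.and (h2.and h3)).exists
  set q : ℝ := (2 ^ s - 1) / β ^ s with hq
  have hone : (1:ℝ) ≤ 2 ^ s := one_le_pow₀ (by norm_num)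
  have hq0 : 0 ≤ q := div_nonneg (by linarith) (by positivity)
  have hq1 : q < 1 := by rw [hq, div_lt_one (by positivity)]; exact hb1
  have ht := tendsto_self_mul_const_pow_of_lt_one hq0 hq1
  have ht' := (ht.const_mul (s * β))
  rw [mul_zero] at ht'
  obtain ⟨r, hr, hr0⟩ := ((ht'.eventually (gt_mem_nhds (show (0:ℝ) < 2 - β by linarith))).and
    (Filter.eventually_gt_atTop 0)).exists
  refine ⟨β, r, hb3, hr0, ?_⟩
  rcases Nat.eq_zero_or_pos s with rfl | hs
  · simp; linarith
  have hsr : 0 < s * r := Nat.mul_pos hs hr0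
  have : β ^ (s * r) = β ^ (s * r - 1) * β := by
    rw [← pow_succ, Nat.sub_add_cancel hsr]
  have hcast : (((2 ^ s - 1) ^ r : ℕ) : ℝ) = ((2:ℝ) ^ s - 1) ^ r := by
    rw [Nat.cast_pow, Nat.cast_sub Nat.one_le_two_pow]; simp
  rw [hcast]
  push_cast
  have hr' : s * β * (r * ((2 ^ s - 1) ^ r / (β ^ (s * r)))) < 2 - β := by
    have : q ^ r = (2 ^ s - 1) ^ r / (β ^ (s * r)) := by rw [hq, div_pow, ← pow_mul]
    rw [← this]; exact hr
  have h6 : s * β * (r * ((2 ^ s - 1) ^ r / (β ^ (s * r)))) =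
      s * r * (2 ^ s - 1) ^ r / β ^ (s * r - 1) := by
    rw [this]; field_simp
  rw [h6, div_lt_iff₀ (by positivity)] at hr'
  exact hr'.le
end MinFun

namespace MinFun
open Finset
section Grp
open scoped Classical

/-- `S` is `D`-separated. -/
def Sep {G : Type*} [Group G] (D S : Finset G) : Prop :=
  ∀ s ∈ S, ∀ t ∈ S, ∀ d ∈ D, ∀ d' ∈ D, d * s = d' * t → s = t

theorem exists_sep {G : Type*} [Group G] [Infinite G] (D : Finset G) (r : ℕ) :
    ∃ H : Finset G, H.card = r ∧ Sep D H := by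
  induction r with
  | zero => exact ⟨∅, rfl, by intro s hs; simp at hs⟩
  | succ r ih =>
    obtain ⟨H, hc, hH⟩ := ih
    obtain ⟨g, hg⟩ := Infinite.exists_notMem_finset
      (H ∪ ((D ×ˢ D) ×ˢ H).image (fun p => p.1.1⁻¹ * p.1.2 * p.2))
    rw [mem_union, not_or] at hg
    have key : ∀ s ∈ H, ∀ d ∈ D, ∀ d' ∈ D, d * g ≠ d' * s := by
      intro s hs d hd d' hd' h
      apply hg.2
      refine mem_image.2 ⟨((d, d'), s), by simp [hd, hd', hs], ?_⟩
      simp only [mul_assoc, ← h]; group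
    refine ⟨insert g H, by rw [card_insert_of_notMem hg.1, hc], ?_⟩
    intro s hs t ht d hd d' hd' h
    rcases mem_insert.1 hs with h1 | h1 <;> rcases mem_insert.1 ht with h2 | h2
    · rw [h1, h2]
    · subst h1; exact absurd h (key t h2 d hd d' hd')
    · subst h2; exact absurd h.symm (key s h1 d' hd' d hd)
    · exact hH s h1 t h2 d hd d' hd' h

theorem exists_hitting {G : Type*} [Group G] [Infinite G] (D : Finset G) :
    ∃ H : Finset G, Sep D H ∧ ∀ L : Finset G, ∃ T : Finset G, Sep D T ∧
      ∀ l ∈ L, ∃ h ∈ H, h * l ∈ T := by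
  set E : Finset G := insert 1 ((D ×ˢ D).image (fun p => p.1⁻¹ * p.2)) with hE
  have h1E : (1 : G) ∈ E := mem_insert_self _ _
  have hDE : ∀ d ∈ D, ∀ d' ∈ D, d'⁻¹ * d ∈ E := fun d hd d' hd' =>
    mem_insert_of_mem (mem_image.2 ⟨(d', d), by simp [hd, hd'], rfl⟩)
  have hs : 0 < E.card := card_pos.2 ⟨1, h1E⟩
  obtain ⟨β, r, hβ, hr, hpar⟩ := exists_params E.card
  obtain ⟨H, hHc, hHE⟩ := exists_sep E r
  refine ⟨H, ?_, ?_⟩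
  · intro s hs t ht d hd d' hd' h
    refine hHE s hs t ht (d'⁻¹ * d) (hDE d hd d' hd') 1 h1E ?_
    rw [mul_assoc, h]; group
  intro L
  set e : G → Finset G := fun l => (E ×ˢ H).image (fun p => p.1 * p.2 * l) with he
  set Bad : G → Finset G → Prop :=
    fun l A => ∀ h ∈ H, E.filter (fun x => x * h * l ∈ A) ≠ {1} with hBad
  have hecard : ∀ l, (e l).card = E.card * r := by
    intro l
    rw [he]
    simp only
    rw [card_image_of_injOn, card_product, hHc]
    rintro ⟨a, h⟩ hp ⟨a', h'⟩ hp' heq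
    simp only [coe_product, Set.mem_prod, mem_coe] at hp hp'
    simp only [mul_left_inj] at heq
    have := hHE h hp.2 h' hp'.2 a hp.1 a' hp'.1 heq
    subst this
    simpa using heq
  have hmem : ∀ l, ∀ x ∈ E, ∀ h ∈ H, x * h * l ∈ e l := fun l x hx h hh =>
    mem_image.2 ⟨(x, h), by simp [hx, hh], rfl⟩
  have hbad : ∀ l, ((e l).powerset.filter (Bad l)).card ≤ (2 ^ E.card - 1) ^ r := by
    intro l
    have hcc : (Fintype.piFinset (fun _ : H => E.powerset.erase {1})).card
        = (2 ^ E.card - 1) ^ r := by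
      rw [Fintype.card_piFinset, prod_const, card_erase_of_mem (by simpa using h1E),
        card_powerset, Finset.card_univ, Fintype.card_coe, hHc]
    rw [← hcc]
    apply card_le_card_of_injOn (fun A => fun h : H => E.filter (fun x => x * h.1 * l ∈ A))
    · intro A hA
      have hA := mem_filter.1 hA
      rw [mem_coe, Fintype.mem_piFinset]
      intro h
      exact mem_erase.2 ⟨hA.2 h.1 h.2, mem_powerset.2 (filter_subset _ _)⟩
    · intro A hA B hB hAB
      have hA := mem_powerset.1 (mem_filter.1 hA).1
      have hB := mem_powerset.1 (mem_filter.1 hB).1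
      have key : ∀ y ∈ e l, (y ∈ A ↔ y ∈ B) := by
        intro y hy
        obtain ⟨⟨x, h⟩, hp, rfl⟩ := mem_image.1 hy
        have hp := mem_product.1 hp
        have := congrFun hAB ⟨h, hp.2⟩
        have := Finset.ext_iff.1 this x
        simpa [hp.1] using this
      ext y
      constructor
      · intro hy; exact (key y (hA hy)).1 hy
      · intro hy; exact (key y (hB hy)).2 hy
  have hdeg : ∀ v, ∃ I : Finset G, I.card ≤ E.card * r ∧ ∀ i, v ∈ e i → i ∈ I := by
    intro v
    refine ⟨(E ×ˢ H).image (fun p => (p.1 * p.2)⁻¹ * v), ?_, ?_⟩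
    · refine card_image_le.trans ?_
      rw [card_product, hHc]
    · intro i hi
      obtain ⟨p, hp, rfl⟩ := mem_image.1 hi
      exact mem_image.2 ⟨p, hp, by group⟩
  obtain ⟨A, hA⟩ := exists_good e Bad _ _ _
    (fun i => by convert hbad i) hecard (Nat.mul_pos hs hr) hdeg β hβ hpar
    (L.biUnion e)
  refine ⟨((H ×ˢ L).image (fun p => p.1 * p.2)).filter
    (fun g => E.filter (fun x => x * g ∈ A) = {1}), ?_, ?_⟩
  · intro s hs t ht d hd d' hd' h
    have hs := (mem_filter.1 hs).2
    have ht := (mem_filter.1 ht).2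
    have hts : t = (d'⁻¹ * d) * s := by rw [mul_assoc, h]; group
    have h1 : (1:G) ∈ E.filter (fun x => x * t ∈ A) := by rw [ht]; simp
    have h2 := (mem_filter.1 h1).2
    have h3 : d'⁻¹ * d ∈ E.filter (fun x => x * s ∈ A) := by
      refine mem_filter.2 ⟨hDE d hd d' hd', ?_⟩
      rw [← hts]; simpa using h2
    rw [hs, mem_singleton] at h3
    rw [hts, h3, one_mul]
  · intro l hl
    have := hA l (subset_biUnion_of_mem e hl)
    simp only [hBad, not_forall, not_not] at this
    obtain ⟨h, hh, heq⟩ := this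
    refine ⟨h, hh, mem_filter.2 ⟨mem_image.2 ⟨(h, l), by simp [hh, hl], rfl⟩, ?_⟩⟩
    rw [← heq]
    apply filter_congr
    intro x hx
    simp [mul_assoc]
    intro _
    simpa [mul_assoc] using hmem l x hx h hh

/-- `W` contains a translate of every finite `D`-separated set of return times. -/
def Good {G : Type*} [Group G] {X : Type*} [MulAction G X] (D : Finset G) (W : Set X) : Prop :=
  ∀ S : Finset G, Sep D S → ∃ x : X, ∀ s ∈ S, s • x ∈ W

theorem syndetic {G : Type*} [Group G] {X : Type*} [TopologicalSpace X] [CompactSpace X]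
    [MulAction G X] [ContinuousConstSMul G X] (hmin : ∀ x : X, Dense (MulAction.orbit G x))
    (V : Set X) (hV : IsOpen V) (hne : V.Nonempty) :
    ∃ L : Finset G, ∀ x : X, ∃ l ∈ L, l • x ∈ V := by
  obtain ⟨t, ht⟩ := isCompact_univ.elim_finite_subcover (fun g : G => (fun x : X => g • x) ⁻¹' V)
    (fun g => hV.preimage (continuous_const_smul g)) (by
      intro x _
      obtain ⟨y, hy, ⟨g, rfl⟩⟩ := (hmin x).inter_open_nonempty V hV hne
      exact Set.mem_iUnion.2 ⟨g, hy⟩)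
  refine ⟨t, fun x => ?_⟩
  have := ht (Set.mem_univ x)
  simpa using this

theorem sep_mul {G : Type*} [Group G] {D S H : Finset G} (hS : Sep D S)
    (hH : Sep ((D ×ˢ S).image (fun p => p.1 * p.2)) H) :
    Sep D ((S ×ˢ H).image (fun p => p.1 * p.2)) := by
  intro a ha b hb d hd d' hd' h
  obtain ⟨⟨s, k⟩, hp, rfl⟩ := mem_image.1 ha
  obtain ⟨⟨s', k'⟩, hp', rfl⟩ := mem_image.1 hb
  have hp := mem_product.1 hp
  have hp' := mem_product.1 hp'
  simp only at hp hp' h ⊢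
  have hk : k = k' := hH k hp.2 k' hp'.2 (d * s) (mem_image.2 ⟨(d, s), by simp [hd, hp.1], rfl⟩)
    (d' * s') (mem_image.2 ⟨(d', s'), by simp [hd', hp'.1], rfl⟩) (by simpa [mul_assoc] using h)
  subst hk
  have hs : s = s' := hS s hp.1 s' hp'.1 d hd d' hd' (by
    rw [← mul_assoc, ← mul_assoc] at h; exact mul_right_cancel h)
  rw [hs]

theorem Good.inter {G : Type*} [Group G] [Infinite G] {X : Type*} [TopologicalSpace X]
    [CompactSpace X] [MulAction G X] [ContinuousConstSMul G X]
    (hmin : ∀ x : X, Dense (MulAction.orbit G x)) {D : Finset G} {W₁ W₂ : Set X}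
    (ho : IsOpen W₁) (h₁ : Good D W₁) (h₂ : Good D W₂) : Good D (W₁ ∩ W₂) := by
  intro S hS
  obtain ⟨H, hH, hL⟩ := exists_hitting ((D ×ˢ S).image (fun p => p.1 * p.2))
  obtain ⟨x₁, hx₁⟩ := h₁ _ (sep_mul hS hH)
  obtain ⟨L, hL'⟩ := syndetic hmin
    (⋂ g ∈ (S ×ˢ H).image (fun p => p.1 * p.2), (fun x : X => g • x) ⁻¹' W₁)
    (isOpen_biInter_finset (fun g _ => ho.preimage (continuous_const_smul g)))
    ⟨x₁, Set.mem_iInter₂.2 hx₁⟩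
  obtain ⟨T, hT, hhit⟩ := hL L
  obtain ⟨x, hx⟩ := h₂ _ (sep_mul hS hT)
  obtain ⟨l, hl, hlV⟩ := hL' x
  obtain ⟨h, hh, hhl⟩ := hhit l hl
  refine ⟨(h * l) • x, fun s hs => ⟨?_, ?_⟩⟩
  · have := Set.mem_iInter₂.1 hlV (s * h) (mem_image.2 ⟨(s, h), by simp [hs, hh], rfl⟩)
    simpa [mul_smul] using this
  · have := hx (s * (h * l)) (mem_image.2 ⟨(s, h * l), by simp [hs, hhl], rfl⟩)
    rw [mul_smul] at this
    exact this

/-- The separated covering property holds for all minimal flows. -/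
theorem scp {G : Type*} [Group G] [Infinite G] {X : Type*} [TopologicalSpace X]
    [CompactSpace X] [T2Space X] [MulAction G X] [ContinuousConstSMul G X]
    (hmin : ∀ x : X, Dense (MulAction.orbit G x)) (D : Finset G) (U : Set X) (hU : IsOpen U)
    (hne : U.Nonempty) : ∃ S : Finset G, Sep D S ∧ ∀ x : X, ∃ s ∈ S, s • x ∈ U := by
  obtain ⟨y, hy⟩ := hne
  obtain ⟨U₀, hU₀, hyU₀', hcl⟩ :=
    (isCompact_singleton (x := y)).exists_isOpen_closure_subset (hU.mem_nhdsSet.2 (by simpa using hy))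
  have hyU₀ : y ∈ U₀ := hyU₀' rfl
  by_contra hcon
  push Not at hcon
  set W : Set X := (closure U₀)ᶜ with hW
  have hWo : IsOpen W := isClosed_closure.isOpen_compl
  have hgood : Good D W := by
    intro S hS
    obtain ⟨x, hx⟩ := hcon S hS
    exact ⟨x, fun s hs h => hx s hs (hcl h)⟩
  obtain ⟨K, hK⟩ := syndetic hmin U₀ hU₀ ⟨y, hyU₀⟩
  set D' := (D ×ˢ K).image (fun p => p.1 * p.2) with hD'
  have hk : ∀ k ∈ K, Good D' ((fun x : X => k • x) ⁻¹' W) := by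
    intro k hk S hS
    obtain ⟨x, hx⟩ := hgood (S.image (fun s => k * s)) (by
      intro a ha b hb d hd d' hd' h
      obtain ⟨s, hs, rfl⟩ := mem_image.1 ha
      obtain ⟨t, ht, rfl⟩ := mem_image.1 hb
      rw [hS s hs t ht (d * k) (mem_image.2 ⟨(d, k), by simp [hd, hk], rfl⟩) (d' * k)
        (mem_image.2 ⟨(d', k), by simp [hd', hk], rfl⟩) (by simpa [mul_assoc] using h)])
    refine ⟨x, fun s hs => ?_⟩
    have := hx _ (mem_image_of_mem _ hs)
    rwa [mul_smul] at this
  have hall : ∀ K' ⊆ K, Good D' (⋂ k ∈ K', (fun x : X => k • x) ⁻¹' W) := by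
    intro K'
    induction K' using Finset.induction_on with
    | empty => intro _ S _; exact ⟨y, by simp⟩
    | insert k K' hkK ih =>
      intro hsub
      rw [Finset.set_biInter_insert]
      exact Good.inter hmin (hWo.preimage (continuous_const_smul k))
        (hk k (hsub (mem_insert_self _ _))) (ih ((subset_insert _ _).trans hsub))
  obtain ⟨x, hx⟩ := hall K subset_rfl {1} (by
    intro s hs t ht _ _ _ _ _
    rw [mem_singleton.1 hs, mem_singleton.1 ht])
  have hx1 := hx 1 (mem_singleton_self _)
  rw [one_smul] at hx1
  obtain ⟨k, hkK, hkx⟩ := hK x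
  exact (Set.mem_iInter₂.1 hx1 k hkK) (subset_closure hkx)
end Grp
end MinFun

namespace MinFun
open Finset
section Main
open scoped Classical

theorem exists_avoid {G J : Type u} [Infinite G] (hJ : Cardinal.mk J < Cardinal.mk G)
    (F : J → Finset G) : ∃ g : G, ∀ j, g ∉ F j := by
  by_contra hcon
  push Not at hcon
  have hU : (⋃ j, (F j : Set G)) = Set.univ := by
    ext g; simpa using hcon g
  rcases finite_or_infinite J with hf | hi
  · have : (⋃ j, (F j : Set G)).Finite := Set.finite_iUnion (fun j => (F j).finite_toSet)
    rw [hU] at this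
    exact Set.infinite_univ this
  · have h1 := Cardinal.mk_iUnion_le_sum_mk (f := fun j => (F j : Set G))
    rw [hU, Cardinal.mk_univ] at h1
    have h2 : Cardinal.sum (fun j => Cardinal.mk (F j : Set G)) ≤
        Cardinal.sum (fun _ : J => Cardinal.aleph0) :=
      Cardinal.sum_le_sum _ _ (fun j => (Cardinal.lt_aleph0_of_finite _).le)
    rw [Cardinal.sum_const', Cardinal.mul_aleph0_eq (Cardinal.aleph0_le_mk J)] at h2
    exact absurd (h1.trans h2) (not_le.2 hJ)

theorem exists_transitive (G : Type u) [Group G] [Infinite G] :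
    ∃ ω : Set G, ∀ S B : Finset G, ∃ h : G, ∀ s ∈ S, (s * h ∈ ω ↔ s ∈ B) := by
  have hcard : Cardinal.mk G = Cardinal.mk (Finset G × Finset G) := by
    rw [Cardinal.mk_prod, Cardinal.lift_id, Cardinal.mk_finset_of_infinite,
      Cardinal.mul_eq_self (Cardinal.aleph0_le_mk G)]
  obtain ⟨p⟩ := Cardinal.eq.1 hcard
  obtain ⟨lo, wf, hord⟩ := Cardinal.exists_ord_eq_type_lt G
  have hex : ∀ (i : G) (ih : ∀ j : G, j < i → G), ∃ g : G, ∀ j : Set.Iio i,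
      g ∉ (((p i).1 ×ˢ (p j).1).image (fun q => q.1⁻¹ * (q.2 * ih j.1 j.2))) := by
    intro i ih
    exact exists_avoid (Cardinal.mk_Iio_lt i hord) _
  let f : G → G := wf.wf.fix (fun i ih => (hex i ih).choose)
  have hf : ∀ i j, j < i → ∀ s ∈ (p i).1, ∀ t ∈ (p j).1, s * f i ≠ t * f j := by
    intro i j hji s hs t ht heq
    have h1 : f i = (hex i (fun j _ => f j)).choose := wf.wf.fix_eq _ i
    have h2 := (hex i (fun j _ => f j)).choose_spec ⟨j, hji⟩
    rw [← h1] at h2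
    apply h2
    refine mem_image.2 ⟨(s, t), by simp [hs, ht], ?_⟩
    simp only [← heq]; group
  refine ⟨{g | ∃ i, ∃ s ∈ (p i).1, s ∈ (p i).2 ∧ g = s * f i}, fun S B => ?_⟩
  set i := p.symm (S, B) with hi
  have hpi : p i = (S, B) := by simp [hi]
  refine ⟨f i, fun s hs => ⟨?_, ?_⟩⟩
  · rintro ⟨j, t, ht, htB, heq⟩
    rcases lt_trichotomy i j with h | h | h
    · exact absurd heq.symm (hf j i h t ht s (by rw [hpi]; exact hs))
    · subst h
      have := mul_right_cancel heq
      subst this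
      rw [hpi] at htB; exact htB
    · exact absurd heq (hf i j h s (by rw [hpi]; exact hs) t ht)
  · intro hB
    exact ⟨i, s, by rw [hpi]; exact hs, by rw [hpi]; exact hB, rfl⟩

theorem multi {G : Type u} [Group G] [Infinite G] (δ : ℝ) (hδ : 0 < δ) (Φ : Finset (G → ℝ)) :
    (∀ φ ∈ Φ, IsMinimalFunction φ) → ∃ (S : Finset G) (a : (G → ℝ) → G → ℝ),
      ∀ h : G, ∃ s ∈ S, ∀ φ ∈ Φ, |φ (s * h) - a φ s| < δ := by
  induction Φ using Finset.induction_on with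
  | empty => intro _; exact ⟨{1}, fun _ _ => 0, fun h => ⟨1, by simp, by simp⟩⟩
  | insert φ₀ Φ hφ₀ ih =>
    intro hmin
    obtain ⟨S, a, ha⟩ := ih (fun φ hφ => hmin φ (mem_insert_of_mem hφ))
    obtain ⟨X, _, _, _, _, _, hd, x₀, f, hf⟩ := hmin φ₀ (mem_insert_self _ _)
    obtain ⟨T, hT, hTU⟩ := scp hd S
      (⋂ s ∈ S, (fun y : X => |f (s • y) - f (s • x₀)|) ⁻¹' Set.Iio δ)
      (isOpen_biInter_finset (fun s _ => isOpen_Iio.preimage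
        (((f.continuous.comp (continuous_const_smul s)).sub continuous_const).abs)))
      ⟨x₀, Set.mem_iInter₂.2 (fun s _ => by simpa using hδ)⟩
    have hσ : ∃ σ : G → G, ∀ s ∈ S, ∀ t ∈ T, σ (s * t) = s := by
      have : ∀ g : G, ∃ r : G, ∀ s ∈ S, ∀ t ∈ T, s * t = g → r = s := by
        intro g
        by_cases h : ∃ s ∈ S, ∃ t ∈ T, s * t = g
        · obtain ⟨s, hs, t, ht, hg⟩ := h
          refine ⟨s, fun s' hs' t' ht' hg' => ?_⟩
          have heq : s * t = s' * t' := hg.trans hg'.symm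
          have htt := hT t ht t' ht' s hs s' hs' heq
          subst htt
          exact mul_right_cancel heq
        · exact ⟨1, fun s hs t ht hg => absurd ⟨s, hs, t, ht, hg⟩ h⟩
      choose σ hσ using this
      exact ⟨σ, fun s hs t ht => hσ _ s hs t ht rfl⟩
    obtain ⟨σ, hσ⟩ := hσ
    refine ⟨(S ×ˢ T).image (fun p => p.1 * p.2),
      fun φ g => if φ = φ₀ then f (σ g • x₀) else a φ (σ g), fun h => ?_⟩
    obtain ⟨t, ht, htU⟩ := hTU (h • x₀)
    obtain ⟨s, hs, hsφ⟩ := ha (t * h)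
    refine ⟨s * t, mem_image.2 ⟨(s, t), by simp [hs, ht], rfl⟩, fun φ hφ => ?_⟩
    beta_reduce
    rw [hσ s hs t ht]
    by_cases heq : φ = φ₀
    · rw [if_pos heq, heq, hf]
      have := Set.mem_iInter₂.1 htU s hs
      simpa [mul_smul] using this
    · rw [if_neg heq, mul_assoc]
      exact hsφ φ (mem_of_mem_insert_of_ne hφ heq)

/-- Uniform continuity with respect to the minimal functions. -/
def UC {G : Type u} [Group G] (φ : G → ℝ) : Prop :=
  ∀ ε > 0, ∃ Φ : Finset (G → ℝ), (∀ ψ ∈ Φ, IsMinimalFunction ψ) ∧ ∃ δ > 0, ∀ g g' : G,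
    (∀ ψ ∈ Φ, |ψ g - ψ g'| < δ) → |φ g - φ g'| < ε

theorem UC.pair {G : Type u} [Group G] {φ ψ : G → ℝ} (h₁ : UC φ) (h₂ : UC ψ) (ε : ℝ) (hε : 0 < ε) :
    ∃ Φ : Finset (G → ℝ), (∀ ψ ∈ Φ, IsMinimalFunction ψ) ∧ ∃ δ > 0, ∀ g g' : G,
    (∀ ψ ∈ Φ, |ψ g - ψ g'| < δ) → |φ g - φ g'| < ε ∧ |ψ g - ψ g'| < ε := by
  obtain ⟨Φ₁, hm₁, δ₁, hδ₁, H₁⟩ := h₁ ε hε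
  obtain ⟨Φ₂, hm₂, δ₂, hδ₂, H₂⟩ := h₂ ε hε
  refine ⟨Φ₁ ∪ Φ₂, ?_, min δ₁ δ₂, lt_min hδ₁ hδ₂, fun g g' h => ⟨?_, ?_⟩⟩
  · intro ψ hψ
    rcases mem_union.1 hψ with h | h
    · exact hm₁ ψ h
    · exact hm₂ ψ h
  · exact H₁ g g' (fun ψ hψ => (h ψ (mem_union_left _ hψ)).trans_le (min_le_left _ _))
  · exact H₂ g g' (fun ψ hψ => (h ψ (mem_union_right _ hψ)).trans_le (min_le_right _ _))

theorem uc_adjoin {G : Type u} [Group G] (φ : lp (fun _ : G => ℝ) ∞)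
    (hφ : φ ∈ Algebra.adjoin ℝ {φ : lp (fun _ : G => ℝ) ∞ | IsMinimalFunction (φ : G → ℝ)}) :
    UC (φ : G → ℝ) := by
  induction hφ using Algebra.adjoin_induction with
  | mem x hx =>
    intro ε hε
    exact ⟨{(x : G → ℝ)}, by simpa using hx, ε, hε, fun g g' h => h _ (mem_singleton_self _)⟩
  | algebraMap r =>
    intro ε hε
    refine ⟨∅, by simp, 1, one_pos, fun g g' _ => ?_⟩
    rw [Algebra.algebraMap_eq_smul_one]
    simpa using hε
  | add x y _ _ hx hy =>
    intro ε hε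
    obtain ⟨Φ, hΦ, δ, hδ, H⟩ := hx.pair hy (ε / 2) (by linarith)
    refine ⟨Φ, hΦ, δ, hδ, fun g g' h => ?_⟩
    obtain ⟨h1, h2⟩ := H g g' h
    rw [lp.coeFn_add, Pi.add_apply, Pi.add_apply]
    rw [abs_lt] at *
    constructor <;> linarith
  | mul x y _ _ hx hy =>
    intro ε hε
    have hC : 0 < ‖x‖ + ‖y‖ + 1 := by positivity
    obtain ⟨Φ, hΦ, δ, hδ, H⟩ := hx.pair hy (ε / (‖x‖ + ‖y‖ + 1)) (by positivity)
    refine ⟨Φ, hΦ, δ, hδ, fun g g' h => ?_⟩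
    obtain ⟨h1, h2⟩ := H g g' h
    rw [lp.infty_coeFn_mul, Pi.mul_apply, Pi.mul_apply]
    have hx' := lp.norm_apply_le_norm ENNReal.top_ne_zero x g
    have hy' := lp.norm_apply_le_norm ENNReal.top_ne_zero y g'
    rw [Real.norm_eq_abs] at hx' hy'
    have e1 : x g * y g - x g' * y g' = x g * (y g - y g') + (x g - x g') * y g' := by ring
    rw [e1]
    calc _ ≤ |x g| * |y g - y g'| + |x g - x g'| * |y g'| := by
          rw [← abs_mul, ← abs_mul]; exact abs_add_le _ _
      _ ≤ ‖x‖ * (ε / (‖x‖ + ‖y‖ + 1)) + (ε / (‖x‖ + ‖y‖ + 1)) * ‖y‖ := by gcongr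
      _ = ε / (‖x‖ + ‖y‖ + 1) * (‖x‖ + ‖y‖) := by ring
      _ < ε / (‖x‖ + ‖y‖ + 1) * (‖x‖ + ‖y‖ + 1) := 
          mul_lt_mul_of_pos_left (by linarith) (by positivity)
      _ = ε := by field_simp

theorem uc_closure {G : Type u} [Group G] (φ : lp (fun _ : G => ℝ) ∞)
    (hφ : φ ∈ (Algebra.adjoin ℝ
      {φ : lp (fun _ : G => ℝ) ∞ | IsMinimalFunction (φ : G → ℝ)}).topologicalClosure) :
    UC (φ : G → ℝ) := by
  intro ε hε
  have hφ' : φ ∈ closure (Algebra.adjoin ℝ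
      {φ : lp (fun _ : G => ℝ) ∞ | IsMinimalFunction (φ : G → ℝ)} : Set _) := hφ
  obtain ⟨ψ, hψ, hd⟩ := Metric.mem_closure_iff.1 hφ' (ε / 3) (by linarith)
  obtain ⟨Φ, hΦ, δ, hδ, H⟩ := uc_adjoin ψ hψ (ε / 3) (by linarith)
  refine ⟨Φ, hΦ, δ, hδ, fun g g' h => ?_⟩
  have h1 := H g g' h
  have key : ∀ g, |φ g - ψ g| < ε / 3 := by
    intro g
    have := lp.norm_apply_le_norm ENNReal.top_ne_zero (φ - ψ) g
    rw [lp.coeFn_sub, Pi.sub_apply, Real.norm_eq_abs, ← dist_eq_norm] at this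
    exact this.trans_lt hd
  have h2 := key g
  have h3 := key g'
  rw [abs_lt] at *
  constructor <;> linarith

theorem not_uc {G : Type u} [Group G] [Infinite G] (ω : Set G)
    (hω : ∀ S B : Finset G, ∃ h : G, ∀ s ∈ S, (s * h ∈ ω ↔ s ∈ B)) :
    ¬ UC (ω.indicator (fun _ => (1 : ℝ))) := by
  intro huc
  obtain ⟨Φ, hΦ, δ, hδ, H⟩ := huc 1 one_pos
  have H' : ∀ g g' : G, (∀ ψ ∈ Φ, |ψ g - ψ g'| < δ) → (g ∈ ω ↔ g' ∈ ω) := by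
    intro g g' h
    have := H g g' h
    by_cases h1 : g ∈ ω <;> by_cases h2 : g' ∈ ω <;> simp [h1, h2] at this ⊢
  obtain ⟨S, a, ha⟩ := multi (δ / 2) (by linarith) Φ hΦ
  obtain ⟨h, hh⟩ := hω S (S.filter (fun s =>
    ¬ ∃ h, (∀ φ ∈ Φ, |φ (s * h) - a φ s| < δ / 2) ∧ s * h ∈ ω))
  obtain ⟨s, hs, hsφ⟩ := ha h
  have h1 := hh s hs
  rw [mem_filter] at h1
  by_cases hc : s * h ∈ ω
  · exact (h1.1 hc).2 ⟨h, hsφ, hc⟩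
  · apply hc
    apply h1.2
    refine ⟨hs, ?_⟩
    rintro ⟨h', hφ', hm⟩
    apply hc
    refine (H' (s * h') (s * h) (fun ψ hψ => ?_)).1 hm
    have e1 := hφ' ψ hψ
    have e2 := hsφ ψ hψ
    rw [abs_lt] at *
    constructor <;> linarith
end Main
end MinFun

/-- Let `G` be an infinite discrete group.  Then the smallest norm-closed
subalgebra `𝔄(G)` of `ℓ∞(G)` containing all minimal functions is a proper subalgebra:
`𝔄(G) ≠ ℓ∞(G)`.  Here `ℓ∞(G)` is realized as `lp (fun _ : G => ℝ) ∞`. -/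
theorem algebra_of_minimal_functions_proper
    (G : Type u) [Group G] [Infinite G] :
    (Algebra.adjoin ℝ
        {φ : lp (fun _ : G => ℝ) ∞ | IsMinimalFunction (φ : G → ℝ)}).topologicalClosure
      ≠ ⊤ := by
  intro htop
  obtain ⟨ω, hω⟩ := MinFun.exists_transitive G
  have hmem : Memℓp (ω.indicator (fun _ => (1 : ℝ)) : G → ℝ) ∞ := by
    refine memℓp_infty ⟨1, ?_⟩
    rintro _ ⟨g, rfl⟩
    by_cases h : g ∈ ω <;> simp [h]
  refine MinFun.not_uc ω hω (MinFun.uc_closure ⟨_, hmem⟩ ?_)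
  rw [htop]
  trivial
end

section
/- Let G be a countable, infinite discrete group and let X be a metrizable, minimal G-flow. Then there exists a minimal, metrizable, free G-flow Y such that X and Y are disjoint. -/
open Pointwise

universe u v

/-- A bundled `G`-flow carrier: a type with a topology and a `G`-action. -/
structure GFlow (G : Type u) [Group G] : Type (u + 1) where
  carrier : Type u
  [topology : TopologicalSpace carrier]
  [mulAction : MulAction G carrier]

attribute [instance] GFlow.topology GFlow.mulAction

namespace BD
/-- classical filter -/
noncomputable def flt {α : Type*} (Ω : Finset α) (p : α → Prop) : Finset α :=
  @Finset.filter α p (Classical.decPred p) Ω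

lemma mem_flt {α : Type*} {Ω : Finset α} {p : α → Prop} {a : α} :
    a ∈ flt Ω p ↔ a ∈ Ω ∧ p a := by
  unfold flt; exact @Finset.mem_filter α p (Classical.decPred p) Ω a

lemma card_flt {α : Type*} (Ω : Finset α) (p q : α → Prop) :
    (flt Ω (fun c => p c ∧ q c)).card + (flt Ω (fun c => p c ∧ ¬ q c)).card = (flt Ω p).card := by
  classical
  rw [← Finset.card_union_of_disjoint]
  · congr 1
    ext c
    simp only [Finset.mem_union, mem_flt]; tauto
  · rw [Finset.disjoint_left]
    intro c h1 h2
    exact (mem_flt.1 h2).2.2 (mem_flt.1 h1).2.2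

open Classical in
/-- A counting form of the symmetric local lemma. -/
lemma lll {α ι : Type*} (Ω : Finset α) (hΩ : Ω.Nonempty) (P : ι → α → Prop)
    (N : ι → Finset ι) (Δ : ℕ) (hΔ : 0 < Δ) (hN : ∀ i, (N i).card ≤ Δ)
    (δ : ℝ) (_hδ0 : 0 ≤ δ) (hδ : 4 * Δ * δ ≤ 1)
    (hP : ∀ i, ∀ M0 : Finset ι, Disjoint M0 (N i) →
      ((flt Ω (fun c => (∀ m ∈ M0, P m c) ∧ ¬ P i c)).card : ℝ) ≤
        δ * (flt Ω (fun c => ∀ m ∈ M0, P m c)).card) (M : Finset ι) :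
    (flt Ω (fun c => ∀ m ∈ M, P m c)).Nonempty := by
  set cnt : Finset ι → ℝ := fun M => ((flt Ω (fun c => ∀ m ∈ M, P m c)).card : ℝ) with hcnt
  set bad : Finset ι → ι → ℝ :=
    fun M i => ((flt Ω (fun c => (∀ m ∈ M, P m c) ∧ ¬ P i c)).card : ℝ) with hbad
  have hcnt0 : ∀ M, 0 ≤ cnt M := fun M => Nat.cast_nonneg _
  have hins : ∀ M i, cnt (insert i M) = cnt M - bad M i := by
    intro M i
    have h1 := card_flt Ω (fun c => ∀ m ∈ M, P m c) (fun c => P i c)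
    have h2 : (flt Ω (fun c => ∀ m ∈ insert i M, P m c)) =
        flt Ω (fun c => (∀ m ∈ M, P m c) ∧ P i c) := by
      ext c; simp only [mem_flt, Finset.forall_mem_insert]; tauto
    simp only [hcnt, hbad, h2]
    rw [← h1]; push_cast; ring
  have hD : (0:ℝ) < Δ := by exact_mod_cast hΔ
  have hD1 : (1:ℝ) ≤ Δ := by exact_mod_cast hΔ
  obtain ⟨ε, hε⟩ : ∃ ε : ℝ, ε = 1 / (2 * Δ) := ⟨_, rfl⟩
  have hε0 : 0 < ε := by rw [hε]; positivity
  have hεΔ : ε * Δ = 1 / 2 := by rw [hε]; field_simp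
  have hε1 : ε ≤ 1 / 2 := by nlinarith
  have key : ∀ M i, bad M i ≤ ε * cnt M := by
    intro M
    induction M using Finset.strongInduction with
    | H M ih =>
      intro i
      set M0 := M \ N i with hM0
      have step : ∀ K : Finset ι, K ⊆ M ∩ N i → (1 - ε) ^ K.card * cnt M0 ≤ cnt (M0 ∪ K) := by
        intro K
        induction K using Finset.induction_on with
        | empty => intro _; simp
        | insert k K hk ihK =>
          intro hsub
          have hkM : k ∈ M ∩ N i := hsub (Finset.mem_insert_self _ _)
          have hKs : K ⊆ M ∩ N i := fun x hx => hsub (Finset.mem_insert_of_mem hx)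
          have h1 := ihK hKs
          have hlt : M0 ∪ K ⊂ M := by
            refine (Finset.ssubset_iff_of_subset ?_).2 ⟨k, (Finset.mem_inter.1 hkM).1, ?_⟩
            · intro x hx
              rcases Finset.mem_union.1 hx with hx | hx
              · exact (Finset.mem_sdiff.1 hx).1
              · exact (Finset.mem_inter.1 (hKs hx)).1
            · intro hx
              rcases Finset.mem_union.1 hx with hx | hx
              · exact (Finset.mem_sdiff.1 hx).2 (Finset.mem_inter.1 hkM).2
              · exact hk hx
          have h2 := ih _ hlt k
          rw [Finset.union_insert, hins, Finset.card_insert_of_notMem hk, pow_succ]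
          nlinarith
      have h1 := step (M ∩ N i) (Finset.Subset.refl _)
      have h2 : M0 ∪ (M ∩ N i) = M := by
        rw [hM0]; exact Finset.sdiff_union_inter M (N i)
      rw [h2] at h1
      have h3 : (1:ℝ) / 2 ≤ (1 - ε) ^ (M ∩ N i).card := by
        have hb := one_add_mul_le_pow (a := -ε) (by linarith) (M ∩ N i).card
        have hc : ((M ∩ N i).card : ℝ) ≤ Δ := by
          exact_mod_cast (Finset.card_le_card Finset.inter_subset_right).trans (hN i)
        have : (1:ℝ)/2 ≤ 1 + ((M ∩ N i).card : ℝ) * (-ε) := by nlinarith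
        calc (1:ℝ)/2 ≤ _ := this
          _ ≤ _ := hb
          _ = _ := by ring
      have h4 : bad M i ≤ bad M0 i := by
        simp only [hbad]
        norm_cast
        refine Finset.card_le_card ?_
        intro c hc
        simp only [mem_flt] at hc ⊢
        exact ⟨hc.1, fun m hm => hc.2.1 m (Finset.mem_sdiff.1 hm).1, hc.2.2⟩
      have h5 : bad M0 i ≤ δ * cnt M0 := hP i M0 Finset.sdiff_disjoint
      have h6 : cnt M0 ≤ 2 * cnt M := by nlinarith [hcnt0 M0]
      have h7 : 2 * δ ≤ ε := by
        rw [hε, le_div_iff₀ (by positivity)]; linarith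
      nlinarith [hcnt0 M, hcnt0 M0]
  have pos : ∀ M, 0 < cnt M := by
    intro M
    induction M using Finset.induction_on with
    | empty => 
      obtain ⟨a, ha⟩ := hΩ
      have : 0 < (flt Ω (fun c => ∀ m ∈ (∅ : Finset ι), P m c)).card :=
        Finset.card_pos.2 ⟨a, mem_flt.2 ⟨ha, by simp⟩⟩
      simp only [hcnt]
      exact_mod_cast this
    | insert k K hk ihK =>
      rw [hins]; nlinarith [key K k]
  have := pos M
  simp only [hcnt] at this
  exact Finset.card_pos.1 (by exact_mod_cast this)

section
variable {G : Type*} [Group G]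

/-- pattern at `h`: `h ∈ c` but no other element of `E h` is in `c`. -/
def pat (E : Finset G) (h : G) (c : Finset G) : Prop := h ∈ c ∧ ∀ e ∈ E, e ≠ 1 → e * h ∉ c

open Classical in
lemma pat_modify (E : Finset G) (h1 : (1:G) ∈ E) (h h' : G)
    (hd : ∀ e ∈ E, ∀ e' ∈ E, e' * h' ≠ e * h) (c : Finset G) :
    pat E h' (insert h (c \ E.image (· * h))) ↔ pat E h' c := by
  have key : ∀ e' ∈ E, (e' * h' ∈ insert h (c \ E.image (· * h)) ↔ e' * h' ∈ c) := by
    intro e' he'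
    have a1 : e' * h' ≠ h := by simpa using hd 1 h1 e' he'
    have a2 : ∀ e ∈ E, e * h ≠ e' * h' := fun e he => (hd e he e' he').symm
    simp only [Finset.mem_insert, a1, Finset.mem_sdiff, Finset.mem_image, false_or, not_exists,
      not_and, and_iff_left_iff_imp]
    exact fun _ => a2
  unfold pat
  have k1 := key 1 h1
  rw [one_mul] at k1
  rw [k1]
  refine and_congr_right fun _ => forall₂_congr fun e he => ?_
  rw [key e he]

open Classical in
lemma pat_new (E : Finset G) (h : G) (c : Finset G) :
    pat E h (insert h (c \ E.image (· * h))) := by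
  refine ⟨Finset.mem_insert_self _ _, fun e he hne hmem => ?_⟩
  simp only [Finset.mem_insert, Finset.mem_sdiff, Finset.mem_image, mul_eq_right] at hmem
  rcases hmem with hm | hm
  · exact hne hm
  · exact hm.2 ⟨e, he, rfl⟩

open Classical in
/-- one block -/
lemma block (E : Finset G) (hE : (1:G) ∈ E) (h : G) (W : Finset G) (hW : h ∈ W) (Q : Finset G → Prop)
    (hQ : ∀ c, Q c → Q (insert h (c \ E.image (· * h)))) :
    ((flt W.powerset (fun c => Q c ∧ ¬ pat E h c)).card : ℝ) ≤
      (1 - 1 / 2 ^ E.card) * (flt W.powerset Q).card := by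
  have h1 := card_flt W.powerset Q (fun c => pat E h c)
  have h2 : (flt W.powerset Q).card ≤
      (flt W.powerset (fun c => Q c ∧ pat E h c)).card * 2 ^ E.card := by
    have : (flt W.powerset Q).card ≤
      ((flt W.powerset (fun c => Q c ∧ pat E h c)) ×ˢ (E.image (· * h)).powerset).card := by
      refine Finset.card_le_card_of_injOn
        (fun c => (insert h (c \ E.image (· * h)), c ∩ E.image (· * h) )) ?_ ?_
      · intro c hc
        rw [Finset.mem_coe, mem_flt, Finset.mem_powerset] at hc
        simp only [Finset.coe_product, Set.mem_prod, Finset.mem_coe, mem_flt,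
          Finset.mem_powerset]
        refine ⟨⟨?_, hQ c hc.2, pat_new E h c⟩, Finset.inter_subset_right⟩
        intro x hx
        rcases Finset.mem_insert.1 hx with hx | hx
        · exact hx ▸ hW
        · exact hc.1 (Finset.mem_sdiff.1 hx).1
      · intro c _ c' _ hcc
        simp only [Prod.mk.injEq] at hcc
        have hh : h ∈ E.image (· * h) := Finset.mem_image.2 ⟨1, hE, one_mul h⟩
        ext x
        have e1 := Finset.ext_iff.1 hcc.1 x
        have e2 := Finset.ext_iff.1 hcc.2 x
        by_cases hx : x ∈ E.image (· * h)
        · simpa only [Finset.mem_inter, hx, and_true] using e2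
        · have hxh : x ≠ h := fun hxh => hx (hxh ▸ hh)
          simpa only [Finset.mem_insert, Finset.mem_sdiff, hx, hxh, false_or, not_false_eq_true,
            and_true] using e1
    rw [Finset.card_product, Finset.card_powerset] at this
    refine this.trans (Nat.mul_le_mul_left _ (Nat.pow_le_pow_right (by norm_num)
      Finset.card_image_le))
  have h1' : ((flt W.powerset (fun c => Q c ∧ pat E h c)).card : ℝ) +
    ((flt W.powerset (fun c => Q c ∧ ¬ pat E h c)).card : ℝ) = (flt W.powerset Q).card := by
    exact_mod_cast h1
  have h2' : ((flt W.powerset Q).card : ℝ) ≤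
      (flt W.powerset (fun c => Q c ∧ pat E h c)).card * 2 ^ E.card := by exact_mod_cast h2
  have h3 : ((flt W.powerset Q).card : ℝ) / 2 ^ E.card ≤
      (flt W.powerset (fun c => Q c ∧ pat E h c)).card := by
    rw [div_le_iff₀ (by positivity)]; exact h2'
  rw [sub_mul, one_div_mul_eq_div]
  linarith

open Classical in
lemma exists_sparse (E : Finset G) (R : Set G) (hR : R.Infinite) (n : ℕ) :
    ∃ A : Finset G, (A : Set G) ⊆ R ∧ A.card = n ∧
      ∀ a ∈ A, ∀ a' ∈ A, a ≠ a' → ∀ e ∈ E, ∀ e' ∈ E, e' * a' ≠ e * a := by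
  induction n with
  | zero => exact ⟨∅, by simp, rfl, by simp⟩
  | succ n ih =>
    obtain ⟨A, hA, hc, hs⟩ := ih
    let bad : Finset G := A ∪ ((E ×ˢ E) ×ˢ A).image (fun p => p.1.1⁻¹ * p.1.2 * p.2)
    obtain ⟨b, hb, hbad⟩ := hR.exists_notMem_finset bad
    have hbA : b ∉ A := fun h => hbad (Finset.mem_union_left _ h)
    have hb2 : ∀ e ∈ E, ∀ e' ∈ E, ∀ a ∈ A, e * b ≠ e' * a := by
      intro e he e' he' a ha heq
      refine hbad (Finset.mem_union_right _ (Finset.mem_image.2 ⟨((e, e'), a), ?_, ?_⟩))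
      · simp [he, he', ha]
      · simp [mul_assoc, ← heq]
    refine ⟨insert b A, ?_, by rw [Finset.card_insert_of_notMem hbA, hc], ?_⟩
    · intro x hx
      rcases Finset.mem_insert.1 (Finset.mem_coe.1 hx) with rfl | hx
      · exact hb
      · exact hA hx
    · intro a ha a' ha' hne e he e' he'
      rcases Finset.mem_insert.1 ha with rfl | ha2 <;>
        rcases Finset.mem_insert.1 ha' with rfl | ha2'
      · exact absurd rfl hne
      · exact (hb2 e he e' he' a' ha2').symm
      · exact hb2 e' he' e he a ha2
      · exact hs a ha2 a' ha2' hne e he e' he'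

lemma exists_n (d : ℕ) : ∃ n : ℕ, 0 < n ∧
    4 * ((d * d * (n * n) : ℕ) : ℝ) * (1 - 1 / 2 ^ d : ℝ) ^ n ≤ 1 := by
  have h0 : (0:ℝ) ≤ 1 - 1 / 2 ^ d := by
    rw [sub_nonneg, div_le_one (by positivity)]; exact one_le_pow₀ (by norm_num)
  have h1 : (1 - 1 / 2 ^ d : ℝ) < 1 := by
    have : (0:ℝ) < 1 / 2 ^ d := by positivity
    linarith
  have ht := (tendsto_pow_const_mul_const_pow_of_lt_one 2 h0 h1).const_mul (4 * (d * d : ℝ))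
  rw [mul_zero] at ht
  obtain ⟨n, hn, hn0⟩ := ((ht.eventually (gt_mem_nhds zero_lt_one)).and
    (Filter.eventually_gt_atTop 0)).exists
  refine ⟨n, hn0, ?_⟩
  push_cast
  refine le_trans (le_of_eq ?_) hn.le
  ring

open Classical in
lemma sep_hit (E0 : Finset G) (R : Set G) (hR : R.Infinite) :
    ∃ A : Finset G, (A : Set G) ⊆ R ∧ ∀ M : Finset G, ∃ S : Finset G,
      (∀ s ∈ S, ∀ s' ∈ S, s' * s⁻¹ ∈ E0 → s' = s) ∧ ∀ m ∈ M, ∃ a ∈ A, a * m ∈ S := by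
  let E := insert 1 E0
  have hE : (1:G) ∈ E := Finset.mem_insert_self _ _
  have hd : 0 < E.card := Finset.card_pos.2 ⟨1, hE⟩
  obtain ⟨n, hn0, hn⟩ := exists_n E.card
  obtain ⟨A, hAR, hAn, hA⟩ := exists_sparse E R hR n
  have hr0 : (0:ℝ) ≤ 1 - 1 / 2 ^ E.card := by
    rw [sub_nonneg, div_le_one (by positivity)]; exact one_le_pow₀ (by norm_num)
  refine ⟨A, hAR, fun M => ?_⟩
  let W : Finset G := (A ×ˢ M).image (fun p => p.1 * p.2)
  let P : G → Finset G → Prop := fun m c => m ∈ M → ∃ a ∈ A, pat E (a * m) c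
  let N : G → Finset G := fun m =>
    ((E ×ˢ E) ×ˢ (A ×ˢ A)).image (fun p => p.2.1⁻¹ * p.1.1⁻¹ * p.1.2 * p.2.2 * m)
  have hN : ∀ m, (N m).card ≤ E.card * E.card * (n * n) := by
    intro m
    refine Finset.card_image_le.trans ?_
    simp [Finset.card_product, hAn]
  obtain ⟨c, hc⟩ := lll W.powerset ⟨∅, by simp⟩ P N (E.card * E.card * (n * n)) (by positivity) hN
    ((1 - 1 / 2 ^ E.card) ^ n) (pow_nonneg hr0 _) hn (by
      intro m M0 hdis
      by_cases hm : m ∈ M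
      swap
      · have : flt W.powerset (fun c => (∀ m ∈ M0, P m c) ∧ ¬ P m c) = ∅ := by
          refine Finset.eq_empty_of_forall_notMem fun c h =>
            (mem_flt.1 h).2.2 fun h' => absurd h' hm
        rw [this]
        simp only [Finset.card_empty, Nat.cast_zero]
        exact mul_nonneg (pow_nonneg hr0 _) (Nat.cast_nonneg _)
      have ind : ∀ A' : Finset G, A' ⊆ A →
          ((flt W.powerset (fun c => (∀ m ∈ M0, P m c) ∧ ∀ a ∈ A', ¬ pat E (a * m) c)).card : ℝ)
          ≤ (1 - 1 / 2 ^ E.card) ^ A'.card * (flt W.powerset (fun c => ∀ m ∈ M0, P m c)).card := by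
        intro A'
        induction A' using Finset.induction_on with
        | empty => intro _; simp
        | insert b A' hb ih =>
          intro hsub
          have hbA : b ∈ A := hsub (Finset.mem_insert_self _ _)
          have hA'A : A' ⊆ A := fun x hx => hsub (Finset.mem_insert_of_mem hx)
          have h1 := block E hE (b * m) W (Finset.mem_image.2 ⟨(b, m), by simp [hbA, hm], rfl⟩)
            (fun c => (∀ m ∈ M0, P m c) ∧ ∀ a ∈ A', ¬ pat E (a * m) c) (by
              rintro c ⟨hc1, hc2⟩
              refine ⟨fun m' hm' hm'M => ?_, fun a ha => ?_⟩
              · obtain ⟨a, ha, hp⟩ := hc1 m' hm' hm'M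
                refine ⟨a, ha, ?_⟩
                rw [pat_modify E hE]
                · exact hp
                · intro e he e' he' heq
                  refine Finset.disjoint_left.1 hdis hm' (Finset.mem_image.2
                    ⟨((e', e), (a, b)), by simp [*], ?_⟩)
                  simp only [mul_assoc, ← heq]
                  simp
              · rw [pat_modify E hE]
                · exact hc2 a ha
                · intro e he e' he' heq
                  refine hA b hbA a (hA'A ha) (fun h => hb (h ▸ ha)) e he e' he' ?_
                  simpa [← mul_assoc] using heq)
          have h2 : flt W.powerset (fun c => (∀ m ∈ M0, P m c) ∧
              ∀ a ∈ insert b A', ¬ pat E (a * m) c) =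
              flt W.powerset (fun c => ((∀ m ∈ M0, P m c) ∧ ∀ a ∈ A', ¬ pat E (a * m) c) ∧
                ¬ pat E (b * m) c) := by
            ext c; simp only [mem_flt, Finset.forall_mem_insert]; tauto
          rw [h2, Finset.card_insert_of_notMem hb, pow_succ]
          refine h1.trans ?_
          rw [mul_comm (_ ^ _), mul_assoc]
          exact mul_le_mul_of_nonneg_left (ih hA'A) hr0
      have h3 := ind A (Finset.Subset.refl _)
      rw [hAn] at h3
      refine le_trans (le_of_eq ?_) h3
      congr 2
      ext c
      simp [P, hm, mem_flt]) M
  rw [mem_flt] at hc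
  refine ⟨c.filter (fun h => pat E h c), ?_, ?_⟩
  · intro s hs s' hs' hmem
    simp only [Finset.mem_filter] at hs hs'
    by_contra hne
    refine hs.2.2 (s' * s⁻¹) (Finset.mem_insert_of_mem hmem) ?_ ?_
    · intro h; exact hne (by rwa [mul_inv_eq_one] at h)
    · simpa using hs'.1
  · intro m hm
    obtain ⟨a, ha, hp⟩ := hc.2 m hm hm
    exact ⟨a, ha, Finset.mem_filter.2 ⟨hp.1, hp⟩⟩

lemma scp {X : Type*} [TopologicalSpace X] [CompactSpace X] [MulAction G X]
    [ContinuousConstSMul G X] [Infinite G] (hmin : ∀ x : X, Dense (MulAction.orbit G x))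
    (E0 : Set G) (hE0 : E0.Finite) (U : Set X) (hU : IsOpen U) (hne : U.Nonempty) :
    ∃ S : Finset G, (∀ s ∈ S, ∀ s' ∈ S, s' * s⁻¹ ∈ E0 → s' = s) ∧ ∀ x : X, ∃ s ∈ S, s • x ∈ U := by
  have cover : ∀ V : Set X, IsOpen V → V.Nonempty → ∃ T : Finset G, ∀ x : X, ∃ t ∈ T, t • x ∈ V := by
    intro V hV hVne
    obtain ⟨T, hT⟩ := isCompact_univ.elim_finite_subcover (fun g : G => (fun x : X => g • x) ⁻¹' V)
      (fun g => hV.preimage (continuous_const_smul g)) (by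
        intro x _
        obtain ⟨y, ⟨g, rfl⟩, hy⟩ := (hmin x).exists_mem_open hV hVne
        exact Set.mem_iUnion.2 ⟨g, hy⟩)
    refine ⟨T, fun x => ?_⟩
    have := hT (Set.mem_univ x)
    simpa using this
  obtain ⟨x0, hx0⟩ := hne
  obtain ⟨T, hT⟩ := cover U hU ⟨x0, hx0⟩
  have hinf : {g : G | g • x0 ∈ U}.Infinite := by
    intro hfin
    have : (Set.univ : Set G) ⊆ (T : Set G)⁻¹ * {g : G | g • x0 ∈ U} := by
      intro g _
      obtain ⟨t, ht, htx⟩ := hT (g • x0)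
      exact Set.mem_mul.2 ⟨t⁻¹, by simpa using ht, t * g, by simpa [mul_smul] using htx, by simp⟩
    exact Set.infinite_univ (((T.finite_toSet.inv).mul hfin).subset this)
  obtain ⟨A, hAR, hA⟩ := sep_hit hE0.toFinset _ hinf
  obtain ⟨M, hM⟩ := cover (⋂ a ∈ A, (fun x : X => a • x) ⁻¹' U)
    (isOpen_biInter_finset fun a _ => hU.preimage (continuous_const_smul a))
    ⟨x0, by simp only [Set.mem_iInter]; exact fun a ha => hAR ha⟩
  obtain ⟨S, hS, hSM⟩ := hA M
  refine ⟨S, by simpa using hS, fun x => ?_⟩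
  obtain ⟨m, hm, hmx⟩ := hM x
  obtain ⟨a, ha, has⟩ := hSM m hm
  simp only [Set.mem_iInter] at hmx
  exact ⟨a * m, has, by simpa [mul_smul] using hmx a ha⟩
end
section
variable {G : Type*} [Group G]

/-- The shift on configurations. -/
def sh (g : G) (y : G × G → Fin 3) : G × G → Fin 3 := fun p => y (p.1 * g, p.2)

lemma sh_apply (g : G) (y : G × G → Fin 3) (u j : G) : sh g y (u, j) = y (u * g, j) := rfl

lemma continuous_sh (g : G) : Continuous (sh g) :=
  continuous_pi fun _ => continuous_apply _

/-- `D` is a gluing gauge for `Y`. -/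
def Glue (Y : Set (G × G → Fin 3)) (D : G → G → Set G) : Prop :=
  ∀ R : G → G → (G × G → Fin 3) → Prop, (∀ u j z, R u j z → z ∈ Y) →
    (∀ u j z u' j' z', R u j z → R u' j' z' → u' * u⁻¹ ∈ D j j' → z = z') →
    ∃ y ∈ Y, ∀ u j z, R u j z → y (u, j) = z (u, j)

/-- Closed, shift invariant, strongly irreducible. -/
structure Good (Y : Set (G × G → Fin 3)) : Prop where
  closed : IsClosed Y
  inv : ∀ g, ∀ y ∈ Y, sh g y ∈ Y
  glue : ∃ D : G → G → Set G, (∀ i j, (D i j).Finite) ∧ Glue Y D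

lemma Good.nonempty {Y : Set (G × G → Fin 3)} (h : Good Y) : Y.Nonempty := by
  obtain ⟨D, _, hD⟩ := h.glue
  obtain ⟨y, hy, _⟩ := hD (fun _ _ _ => False) (by simp) (by simp)
  exact ⟨y, hy⟩

lemma Good.symm_glue {Y : Set (G × G → Fin 3)} (h : Good Y) :
    ∃ D : G → G → Set G, (∀ i j, (D i j).Finite) ∧ Glue Y D ∧
      (∀ i j g, g ∈ D i j → g⁻¹ ∈ D j i) := by
  obtain ⟨D, hf, hD⟩ := h.glue
  refine ⟨fun i j => D i j ∪ (D j i)⁻¹, fun i j => (hf i j).union (hf j i).inv, ?_, ?_⟩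
  · intro R h1 h2
    exact hD R h1 (fun u j z u' j' z' hr hr' hl => h2 u j z u' j' z' hr hr' (Or.inl hl))
  · rintro i j g (hg | hg)
    · right; simpa using hg
    · left; exact hg

/-- Extending a partial proper 3-colouring. -/
lemma extend_col [Countable G] (g : G) (hg : g ≠ 1) (W : Set G) (w : G → Fin 3)
    (hw : ∀ u ∈ W, g * u ∈ W → w (g * u) ≠ w u) :
    ∃ c : G → Fin 3, (∀ u ∈ W, c u = w u) ∧ ∀ m, c (g * m) ≠ c m := by
  classical
  obtain ⟨f, hf⟩ := exists_injective_nat G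
  have hpick : ∀ a b : Fin 3, ∃ c, c ≠ a ∧ c ≠ b := by decide
  choose pick hp1 hp2 using hpick
  let wf : WellFounded (fun u v : G => f u < f v) := (measure f).wf
  let step : (u : G) → ((v : G) → f v < f u → Fin 3) → Fin 3 := fun u rec =>
    if u ∈ W then w u else
      pick (if h : f (g * u) < f u then rec (g * u) h else w (g * u))
        (if h : f (g⁻¹ * u) < f u then rec (g⁻¹ * u) h else w (g⁻¹ * u))
  let c : G → Fin 3 := wf.fix step
  have hc : ∀ u, c u = step u (fun v _ => c v) := fun u => wf.fix_eq step u
  have hcW : ∀ u ∈ W, c u = w u := by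
    intro u hu
    rw [hc]; simp only [step, if_pos hu]
  have hcn : ∀ u, u ∉ W → c u = pick (if f (g * u) < f u then c (g * u) else w (g * u))
        (if f (g⁻¹ * u) < f u then c (g⁻¹ * u) else w (g⁻¹ * u)) := by
    intro u hu
    rw [hc]; simp only [step, if_neg hu, dite_eq_ite]
  refine ⟨c, hcW, fun m => ?_⟩
  have hne : f (g * m) ≠ f m := fun h => hg (by simpa using hf h)
  have A : m ∉ W → (f (g * m) < f m ∨ g * m ∈ W) → c m ≠ c (g * m) := by
    intro hm h
    rw [hcn m hm]
    have := hp1 (if f (g * m) < f m then c (g * m) else w (g * m))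
      (if f (g⁻¹ * m) < f m then c (g⁻¹ * m) else w (g⁻¹ * m))
    convert this using 1
    split_ifs with h'
    · rfl
    · exact hcW _ (h.resolve_left h')
  have B : g * m ∉ W → (f m < f (g * m) ∨ m ∈ W) → c (g * m) ≠ c m := by
    intro hm h
    rw [hcn _ hm]
    have := hp2 (if f (g * (g * m)) < f (g * m) then c (g * (g * m)) else w (g * (g * m)))
      (if f (g⁻¹ * (g * m)) < f (g * m) then c (g⁻¹ * (g * m)) else w (g⁻¹ * (g * m)))
    convert this using 1
    rw [inv_mul_cancel_left]
    split_ifs with h'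
    · rfl
    · exact hcW _ (h.resolve_left h')
  by_cases h1 : m ∈ W <;> by_cases h2 : g * m ∈ W
  · rw [hcW _ h1, hcW _ h2]; exact hw m h1 h2
  · exact B h2 (Or.inr h1)
  · exact (A h1 (Or.inr h2)).symm
  · rcases lt_or_gt_of_ne hne with h | h
    · exact (A h1 (Or.inl h)).symm
    · exact B h2 (Or.inl h)

/-- The base flow. -/
def Y0 (G : Type*) [Group G] : Set (G × G → Fin 3) :=
  {y | ∀ g m : G, g ≠ 1 → y (g * m, g) ≠ y (m, g)}

lemma good_Y0 [Countable G] : Good (Y0 G) := by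
  classical
  refine ⟨?_, ?_, ?_⟩
  · have : Y0 G = ⋂ (g : G) (m : G), {y | g ≠ 1 → y (g * m, g) ≠ y (m, g)} := by
      ext y; simp [Y0]
    rw [this]
    refine isClosed_iInter fun g => isClosed_iInter fun m => ?_
    have hcont : Continuous (fun y : G × G → Fin 3 => (y (g * m, g), y (m, g))) := by fun_prop
    exact (isClosed_discrete {a : Fin 3 × Fin 3 | g ≠ 1 → a.1 ≠ a.2}).preimage hcont
  · intro k y hy g m hg
    rw [sh_apply, sh_apply, mul_assoc]
    exact hy g (m * k) hg
  · refine ⟨fun i j => if i = j then {1, i, i⁻¹} else ∅, fun i j => ?_, ?_⟩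
    · dsimp only; split_ifs
      · simp
      · simp
    · intro R hR hl
      have ex : ∀ g : G, ∃ c : G → Fin 3, (∀ u z, R u g z → c u = z (u, g)) ∧
          (g ≠ 1 → ∀ m, c (g * m) ≠ c m) := by
        intro g
        let w : G → Fin 3 := fun u => if h : ∃ z, R u g z then (Classical.choose h) (u, g) else 0
        have hw : ∀ u z, R u g z → w u = z (u, g) := by
          intro u z hz
          have h : ∃ z, R u g z := ⟨z, hz⟩
          have := hl u g _ u g z (Classical.choose_spec h) hz (by simp)
          simp only [w, dif_pos h]
          rw [this]
        by_cases hg : g = 1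
        · exact ⟨w, hw, fun h => absurd hg h⟩
        · obtain ⟨c, hc1, hc2⟩ := extend_col g hg {u | ∃ z, R u g z} w (by
            rintro u ⟨z, hz⟩ ⟨z', hz'⟩
            have := hl u g z _ g z' hz hz' (by simp)
            subst this
            rw [hw _ _ hz, hw _ _ hz']
            exact hR _ _ _ hz g u hg)
          exact ⟨c, fun u z hz => by rw [hc1 u ⟨z, hz⟩, hw u z hz], fun _ => hc2⟩
      choose c hc1 hc2 using ex
      exact ⟨fun p => c p.2 p.1, fun g m hg => hc2 g hg m, fun u j z hz => hc1 j u z hz⟩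

lemma exists_maximal_sep (E : Set G) (h1 : (1:G) ∈ E) (hsymm : ∀ e ∈ E, e⁻¹ ∈ E) (C0 : Set G)
    (h0 : ∀ c ∈ C0, ∀ c' ∈ C0, c' * c⁻¹ ∈ E → c' = c) :
    ∃ C : Set G, C0 ⊆ C ∧ (∀ c ∈ C, ∀ c' ∈ C, c' * c⁻¹ ∈ E → c' = c) ∧
      ∀ h, ∃ e ∈ E, e⁻¹ * h ∈ C := by
  obtain ⟨C, hsub, hC⟩ := zorn_subset_nonempty
    {C : Set G | ∀ c ∈ C, ∀ c' ∈ C, c' * c⁻¹ ∈ E → c' = c} (by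
      intro K hK hchain _
      refine ⟨⋃₀ K, ?_, fun s hs => Set.subset_sUnion_of_mem hs⟩
      rintro c ⟨s, hs, hcs⟩ c' ⟨t, ht, hct⟩ hE
      rcases hchain.total hs ht with h | h
      · exact hK ht c (h hcs) c' hct hE
      · exact hK hs c hcs c' (h hct) hE) C0 h0
  refine ⟨C, hsub, hC.prop, fun h => ?_⟩
  by_contra hcon
  push Not at hcon
  have hno : ∀ c ∈ C, h * c⁻¹ ∉ E := by
    intro c hc hE
    refine hcon _ hE ?_
    simpa using hc
  have hins : insert h C ∈ {C : Set G | ∀ c ∈ C, ∀ c' ∈ C, c' * c⁻¹ ∈ E → c' = c} := by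
    rintro c (rfl | hc) c' (rfl | hc') hE
    · rfl
    · exact absurd (by simpa using hsymm _ hE) (hno c' hc')
    · exact absurd hE (hno c hc)
    · exact hC.prop c hc c' hc' hE
  have : h ∈ C := hC.le_of_ge hins (Set.subset_insert _ _) (Set.mem_insert _ _)
  exact hno h this (by simpa using h1)

/-- The refinement of `Y` forcing the pattern `q` on `B × J0` along a maximal separated set. -/
def refineFlow (Y : Set (G × G → Fin 3)) (E B J0 : Set G) (q : G × G → Fin 3) :
    Set (G × G → Fin 3) :=
  {y | y ∈ Y ∧ ∃ C : G → Bool, (∀ c c', C c = true → C c' = true → c' * c⁻¹ ∈ E → c' = c) ∧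
    (∀ h, ∃ e ∈ E, C (e⁻¹ * h) = true) ∧
    ∀ c, C c = true → ∀ b ∈ B, ∀ j ∈ J0, y (b * c, j) = q (b, j)}

lemma closed_refine (Y : Set (G × G → Fin 3)) (hY : IsClosed Y) (E B J0 : Set G) (hE : E.Finite)
    (q : G × G → Fin 3) : IsClosed (refineFlow Y E B J0 q) := by
  let Z : Set ((G × G → Fin 3) × (G → Bool)) :=
    (Prod.fst ⁻¹' Y) ∩
    ((⋂ (c : G) (c' : G), {p | p.2 c = true → p.2 c' = true → c' * c⁻¹ ∈ E → c' = c}) ∩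
    ((⋂ h : G, ⋃ e ∈ E, {p | p.2 (e⁻¹ * h) = true}) ∩
    ⋂ (c : G) (b : G) (j : G), {p | p.2 c = true → b ∈ B → j ∈ J0 → p.1 (b * c, j) = q (b, j)}))
  have hZ : IsClosed Z := by
    refine (hY.preimage continuous_fst).inter (IsClosed.inter ?_ (IsClosed.inter ?_ ?_))
    · refine isClosed_iInter fun c => isClosed_iInter fun c' => ?_
      have hcont : Continuous (fun p : (G × G → Fin 3) × (G → Bool) => (p.2 c, p.2 c')) := by
        fun_prop
      exact (isClosed_discrete {a : Bool × Bool | a.1 = true → a.2 = true →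
        c' * c⁻¹ ∈ E → c' = c}).preimage hcont
    · refine isClosed_iInter fun h => hE.isClosed_biUnion fun e _ => ?_
      have hcont : Continuous (fun p : (G × G → Fin 3) × (G → Bool) => p.2 (e⁻¹ * h)) := by
        fun_prop
      exact (isClosed_discrete {a : Bool | a = true}).preimage hcont
    · refine isClosed_iInter fun c => isClosed_iInter fun b => isClosed_iInter fun j => ?_
      have hcont : Continuous (fun p : (G × G → Fin 3) × (G → Bool) =>
        (p.2 c, p.1 (b * c, j))) := by fun_prop
      exact (isClosed_discrete {a : Bool × Fin 3 | a.1 = true → b ∈ B → j ∈ J0 →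
        a.2 = q (b, j)}).preimage hcont
  have hcl := isClosedMap_fst_of_compactSpace (X := G × G → Fin 3) (Y := G → Bool) Z hZ
  convert hcl using 1
  ext y
  simp only [refineFlow, Set.mem_ofPred_eq, Set.mem_image, Prod.exists, exists_and_right,
    exists_eq_right, Z, Set.mem_inter_iff, Set.mem_preimage, Set.mem_iInter, Set.mem_iUnion,
    exists_prop]
  constructor
  · rintro ⟨h1, C, h2, h3, h4⟩
    exact ⟨C, h1, h2, h3, fun c b j hc hb hj => h4 c hc b hb j hj⟩
  · rintro ⟨C, h1, h2, h3, h4⟩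
    exact ⟨h1, C, h2, h3, fun c hc b hb j hj => h4 c b j hc hb hj⟩

lemma inv_refine (Y : Set (G × G → Fin 3)) (hY : ∀ g, ∀ y ∈ Y, sh g y ∈ Y) (E B J0 : Set G)
    (q : G × G → Fin 3) (g : G) (y : G × G → Fin 3) (hy : y ∈ refineFlow Y E B J0 q) :
    sh g y ∈ refineFlow Y E B J0 q := by
  obtain ⟨h1, C, h2, h3, h4⟩ := hy
  refine ⟨hY g y h1, fun c => C (c * g), ?_, ?_, ?_⟩
  · intro c c' hc hc' hE
    have := h2 _ _ hc hc' (by simpa [mul_assoc] using hE)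
    simpa using this
  · intro h
    obtain ⟨e, he, hC⟩ := h3 (h * g)
    exact ⟨e, he, by simpa [mul_assoc] using hC⟩
  · intro c hc b hb j hj
    rw [sh_apply, mul_assoc]
    exact h4 _ hc b hb j hj

lemma good_refine {Y : Set (G × G → Fin 3)} (hY : Good Y) (D : G → G → Set G)
    (hDf : ∀ i j, (D i j).Finite) (hD : Glue Y D) (hDs : ∀ i j g, g ∈ D i j → g⁻¹ ∈ D j i)
    (E B J0 : Set G) (hE : E.Finite) (hB : B.Finite) (hJ0 : J0.Finite)
    (h1 : (1:G) ∈ E) (hsymm : ∀ e ∈ E, e⁻¹ ∈ E)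
    (hBE : ∀ b ∈ B, ∀ b' ∈ B, ∀ j ∈ J0, ∀ j' ∈ J0, ∀ g, b' * g * b⁻¹ ∈ D j j' → g ∈ E)
    (q : G × G → Fin 3) (hq : q ∈ Y) : Good (refineFlow Y E B J0 q) := by
  classical
  refine ⟨closed_refine Y hY.closed E B J0 hE q, inv_refine Y hY.inv E B J0 q, ?_⟩
  let No : G → Set G := fun i => ⋃ j ∈ J0, B⁻¹ * D i j
  have hNo : ∀ i, (No i).Finite := fun i => hJ0.biUnion fun j _ => hB.inv.mul (hDf i j)
  let N : G → Set G := fun i => E⁻¹ * No i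
  have hN : ∀ i, (N i).Finite := fun i => hE.inv.mul (hNo i)
  have hNoN : ∀ i g, g ∈ No i → g ∈ N i := by
    intro i g hg
    exact Set.mem_mul.2 ⟨1, by simpa using h1, g, hg, one_mul g⟩
  have hNoI : ∀ i g, ∀ b ∈ B, ∀ j ∈ J0, b * g ∈ D i j → g ∈ No i := by
    intro i g b hb j hj hg
    refine Set.mem_iUnion₂.2 ⟨j, hj, Set.mem_mul.2 ⟨b⁻¹, by simpa using hb, b * g, hg, by simp⟩⟩
  refine ⟨fun i j => D i j ∪ (N j)⁻¹ * E * N i, fun i j =>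
    (hDf i j).union (((hN j).inv.mul hE).mul (hN i)), ?_⟩
  intro R hR hl
  have hl1 : ∀ u j z u' j' z', R u j z → R u' j' z' → u' * u⁻¹ ∈ D j j' → z = z' :=
    fun u j z u' j' z' hr hr' h => hl u j z u' j' z' hr hr' (Or.inl h)
  -- (b)
  have hl2 : ∀ u i z v j z' c c', R u i z → R v j z' → c * u⁻¹ ∈ N i → c' * v⁻¹ ∈ N j →
      c' * c⁻¹ ∈ E → z = z' := by
    intro u i z v j z' c c' hr hr' hc hc' he
    refine hl u i z v j z' hr hr' (Or.inr ?_)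
    refine Set.mem_mul.2 ⟨(c' * v⁻¹)⁻¹ * (c' * c⁻¹), Set.mul_mem_mul (by simpa using hc') he,
      c * u⁻¹, hc, ?_⟩
    group
  have hex : ∀ z, ∃ C : G → Bool, z ∈ refineFlow Y E B J0 q →
    (∀ c c', C c = true → C c' = true → c' * c⁻¹ ∈ E → c' = c) ∧
    (∀ h, ∃ e ∈ E, C (e⁻¹ * h) = true) ∧
    ∀ c, C c = true → ∀ b ∈ B, ∀ j ∈ J0, z (b * c, j) = q (b, j) := by
    intro z
    by_cases hz : z ∈ refineFlow Y E B J0 q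
    · obtain ⟨C, hC⟩ := hz.2
      exact ⟨C, fun _ => hC⟩
    · exact ⟨fun _ => true, fun h => absurd h hz⟩
  choose Cz hCz using hex
  -- kept centres
  let kept : G → (G × G → Fin 3) → Prop := fun c z =>
    ∃ u i, R u i z ∧ Cz z c = true ∧ c * u⁻¹ ∈ N i
  have hkk : ∀ c z c' z', kept c z → kept c' z' → c' * c⁻¹ ∈ E → z = z' := by
    rintro c z c' z' ⟨u, i, hr, _, hn⟩ ⟨v, j, hr', _, hn'⟩ he
    exact hl2 _ _ _ _ _ _ _ _ hr hr' hn hn' he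
  obtain ⟨C, hC0, hCs, hCm⟩ := exists_maximal_sep E h1 hsymm {c | ∃ z, kept c z} (by
    rintro c ⟨z, hz⟩ c' ⟨z', hz'⟩ he
    have := hkk _ _ _ _ hz hz' he
    subst this
    obtain ⟨u, i, hr, hc, _⟩ := hz
    obtain ⟨_, _, _, hc', _⟩ := hz'
    exact (hCz z (hR _ _ _ hr)).1 c c' hc hc' he)
  let new : G → (G × G → Fin 3) → Prop := fun c z =>
    c ∈ C ∧ (¬ ∃ z, kept c z) ∧ z = sh c⁻¹ q
  -- R versus kept
  have hRk : ∀ u i z b c j z', R u i z → b ∈ B → j ∈ J0 → kept c z' →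
      b * c * u⁻¹ ∈ D i j → z = z' := by
    rintro u i z b c j z' hr hb hj ⟨v, j', hr', _, hn⟩ hlink
    have hcu : c * u⁻¹ ∈ N i := hNoN _ _ (hNoI i _ b hb j hj (by rwa [← mul_assoc]))
    exact hl2 _ _ _ _ _ _ c c hr hr' hcu hn (by simpa using h1)
  have hRn : ∀ u i z b c j z', R u i z → b ∈ B → j ∈ J0 → new c z' →
      b * c * u⁻¹ ∈ D i j → z = z' := by
    rintro u i z b c j z' hr hb hj ⟨hcC, hnk, _⟩ hlink
    exfalso
    have hcu : c * u⁻¹ ∈ No i := hNoI i _ b hb j hj (by rwa [← mul_assoc])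
    obtain ⟨e, he, hce⟩ := (hCz z (hR _ _ _ hr)).2.1 c
    have hk : kept (e⁻¹ * c) z := ⟨u, i, hr, hce, Set.mem_mul.2
      ⟨e⁻¹, by simpa using he, c * u⁻¹, hcu, by group⟩⟩
    have := hCs (e⁻¹ * c) (hC0 ⟨z, hk⟩) c hcC (by simpa using he)
    rw [← this] at hk
    exact hnk ⟨z, hk⟩
  have hpp : ∀ c z c' z', (kept c z ∨ new c z) → (kept c' z' ∨ new c' z') → c' * c⁻¹ ∈ E →
      z = z' := by
    intro c z c' z' hc hc' he
    have hcC : c ∈ C := hc.elim (fun h => hC0 ⟨z, h⟩) (fun h => h.1)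
    have hcC' : c' ∈ C := hc'.elim (fun h => hC0 ⟨z', h⟩) (fun h => h.1)
    have := hCs c hcC c' hcC' he
    subst this
    rcases hc with hc | hc <;> rcases hc' with hc' | hc'
    · exact hkk _ _ _ _ hc hc' he
    · exact absurd ⟨z, hc⟩ hc'.2.1
    · exact absurd ⟨z', hc'⟩ hc.2.1
    · rw [hc.2.2, hc'.2.2]
  have hRp : ∀ u i z b c j z', R u i z → b ∈ B → j ∈ J0 → (kept c z' ∨ new c z') →
      b * c * u⁻¹ ∈ D i j → z = z' := by
    intro u i z b c j z' hr hb hj hc hlink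
    rcases hc with hc | hc
    · exact hRk u i z b c j z' hr hb hj hc hlink
    · exact hRn u i z b c j z' hr hb hj hc hlink
  obtain ⟨y, hyY, hy⟩ := hD (fun u j z => R u j z ∨
      (j ∈ J0 ∧ ∃ b ∈ B, ∃ c, u = b * c ∧ (kept c z ∨ new c z)))
    (by
      rintro u j z (hr | ⟨hj, b, hb, c, rfl, ⟨v, i, hr, _⟩ | ⟨_, _, rfl⟩⟩)
      · exact (hR _ _ _ hr).1
      · exact (hR _ _ _ hr).1
      · exact hY.inv _ _ hq)
    (by
      rintro u j z u' j' z' (hr | ⟨hj, b, hb, c, rfl, hc⟩) (hr' | ⟨hj', b', hb', c', rfl, hc'⟩) hlink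
      · exact hl1 _ _ _ _ _ _ hr hr' hlink
      · exact hRp _ _ _ b' c' j' z' hr hb' hj' hc' hlink
      · refine (hRp _ _ _ b c j z hr' hb hj hc ?_).symm
        have := hDs _ _ _ hlink
        simpa [mul_assoc] using this
      · refine hpp c z c' z' hc hc' (hBE b hb b' hb' j hj j' hj' _ ?_)
        simpa [mul_assoc] using hlink)
  refine ⟨y, ⟨hyY, fun c => decide (c ∈ C), ?_, ?_, ?_⟩, fun u j z hr => hy u j z (Or.inl hr)⟩
  · intro c c' hc hc' he
    exact hCs c (by simpa using hc) c' (by simpa using hc') he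
  · simpa using hCm
  · intro c hc b hb j hj
    have hcC : c ∈ C := by simpa using hc
    by_cases hk : ∃ z, kept c z
    · obtain ⟨z, hz⟩ := hk
      rw [hy (b * c) j z (Or.inr ⟨hj, b, hb, c, rfl, Or.inl hz⟩)]
      obtain ⟨u, i, hr, hcz, _⟩ := hz
      exact (hCz z (hR _ _ _ hr)).2.2 c hcz b hb j hj
    · rw [hy (b * c) j (sh c⁻¹ q) (Or.inr ⟨hj, b, hb, c, rfl, Or.inr ⟨hcC, hk, rfl⟩⟩), sh_apply]
      simp

lemma step {X : Type*} [TopologicalSpace X] [CompactSpace X] [MulAction G X]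
    [ContinuousConstSMul G X] [Infinite G] (hmin : ∀ x : X, Dense (MulAction.orbit G x))
    {Y : Set (G × G → Fin 3)} (hY : Good Y) (p : G × G → Fin 3) (hp : p ∈ Y) (F J0 : Set G)
    (hF : F.Finite) (hJ0 : J0.Finite) (U : Set X) (hU : IsOpen U) (hne : U.Nonempty) :
    ∃ Y' ⊆ Y, Good Y' ∧ ∀ y ∈ Y', ∀ x : X, ∃ g : G, g • x ∈ U ∧
      ∀ f ∈ F, ∀ j ∈ J0, sh g y (f, j) = p (f, j) := by
  obtain ⟨D, hDf, hD, hDs⟩ := hY.symm_glue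
  have hfin : ∀ B : Set G, B.Finite → (⋃ j ∈ J0, ⋃ j' ∈ J0, B⁻¹ * D j j' * B).Finite :=
    fun B hB => hJ0.biUnion fun j _ => hJ0.biUnion fun j' _ => (hB.inv.mul (hDf j j')).mul hB
  have hmem : ∀ B : Set G, ∀ b ∈ B, ∀ b' ∈ B, ∀ j ∈ J0, ∀ j' ∈ J0, ∀ g, b' * g * b⁻¹ ∈ D j j' →
      g ∈ ⋃ j ∈ J0, ⋃ j' ∈ J0, B⁻¹ * D j j' * B := by
    intro B b hb b' hb' j hj j' hj' g hg
    refine Set.mem_iUnion₂.2 ⟨j, hj, Set.mem_iUnion₂.2 ⟨j', hj', Set.mem_mul.2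
      ⟨b'⁻¹ * (b' * g * b⁻¹), Set.mul_mem_mul (by simpa using hb') hg, b, hb, by group⟩⟩⟩
  obtain ⟨S, hS, hSx⟩ := scp hmin _ (hfin F hF) U hU hne
  obtain ⟨q, hq, hqv⟩ := hD
    (fun u j z => j ∈ J0 ∧ ∃ f ∈ F, ∃ s ∈ S, u = f * s ∧ z = sh s⁻¹ p)
    (by rintro u j z ⟨_, f, _, s, _, _, rfl⟩; exact hY.inv _ _ hp)
    (by
      rintro u j z u' j' z' ⟨hj, f, hf, s, hs, rfl, rfl⟩ ⟨hj', f', hf', s', hs', rfl, rfl⟩ hl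
      have := hS s hs s' hs' (hmem F f hf f' hf' j hj j' hj' _ (by simpa [mul_assoc] using hl))
      rw [this])
  have hqv' : ∀ f ∈ F, ∀ j ∈ J0, ∀ s ∈ S, q (f * s, j) = p (f, j) := by
    intro f hf j hj s hs
    rw [hqv _ j _ ⟨hj, f, hf, s, hs, rfl, rfl⟩, sh_apply]; simp
  let B : Set G := F * (S : Set G)
  have hB : B.Finite := hF.mul S.finite_toSet
  let E : Set G := {1} ∪ ⋃ j ∈ J0, ⋃ j' ∈ J0, B⁻¹ * D j j' * B
  have hE : E.Finite := (Set.finite_singleton 1).union (hfin B hB)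
  refine ⟨refineFlow Y E B J0 q, fun y hy => hy.1, ?_, ?_⟩
  · refine good_refine hY D hDf hD hDs E B J0 hE hB hJ0 (Or.inl rfl) ?_ ?_ q hq
    · rintro e (he | he)
      · left; simpa using he
      · right
        simp only [Set.mem_iUnion₂] at he
        obtain ⟨j, hj, j', hj', hm⟩ := he
        obtain ⟨_, ⟨b, hb, d, hd, rfl⟩, b', hb', rfl⟩ := hm
        refine hmem B b⁻¹ (by simpa using hb) b' hb' j' hj' j hj _ ?_
        have := hDs _ _ _ hd
        simpa [mul_assoc] using this
    · intro b hb b' hb' j hj j' hj' g hg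
      exact Or.inr (hmem B b hb b' hb' j hj j' hj' g hg)
  · rintro y ⟨_, C, _, hm, hv⟩ x
    obtain ⟨e, _, hc⟩ := hm 1
    obtain ⟨s, hs, hsx⟩ := hSx ((e⁻¹ * 1) • x)
    refine ⟨s * (e⁻¹ * 1), by rwa [mul_smul], fun f hf j hj => ?_⟩
    rw [sh_apply, ← mul_assoc, hv _ hc (f * s) (Set.mul_mem_mul hf hs) j hj, hqv' f hf j hj s hs]
end

/-- Cylinder sets. -/
def cyl {G : Type*} (A : Finset ((G × G) × Fin 3)) : Set (G × G → Fin 3) :=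
  {y | ∀ a ∈ A, y a.1 = a.2}

lemma exists_cyl {G : Type*} (O : Set (G × G → Fin 3)) (hO : IsOpen O) (y : G × G → Fin 3)
    (hy : y ∈ O) : ∃ A : Finset ((G × G) × Fin 3), y ∈ cyl A ∧ cyl A ⊆ O := by
  classical
  obtain ⟨I, u, h1, h2⟩ := isOpen_pi_iff.1 hO y hy
  refine ⟨I.image (fun i => (i, y i)), ?_, ?_⟩
  · intro a ha
    obtain ⟨i, _, rfl⟩ := Finset.mem_image.1 ha
    rfl
  · intro z hz
    refine h2 fun i hi => ?_
    have := hz (i, y i) (Finset.mem_image.2 ⟨i, hi, rfl⟩)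
    rw [show z i = y i from this]
    exact (h1 i hi).2

section
variable {G : Type*} [Group G]

lemma step_cyl {X : Type*} [TopologicalSpace X] [CompactSpace X] [MulAction G X]
    [ContinuousConstSMul G X] [Infinite G] (hmin : ∀ x : X, Dense (MulAction.orbit G x))
    {Y : Set (G × G → Fin 3)} (hY : Good Y) (U : Set X) (hU : IsOpen U)
    (A : Finset ((G × G) × Fin 3)) :
    ∃ Y' ⊆ Y, Good Y' ∧ (U.Nonempty → (Y' ∩ cyl A).Nonempty → ∀ y ∈ Y', ∀ x : X,
      ∃ g : G, g • x ∈ U ∧ sh g y ∈ cyl A) := by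
  classical
  by_cases h : U.Nonempty ∧ (Y ∩ cyl A).Nonempty
  · obtain ⟨hne, p, hp, hpA⟩ := h
    obtain ⟨Y', hsub, hgood, hY'⟩ := step hmin hY p hp (A.image (fun a => a.1.1) : Finset G)
      (A.image (fun a => a.1.2) : Finset G) (Finset.finite_toSet _) (Finset.finite_toSet _) U hU hne
    refine ⟨Y', hsub, hgood, fun _ _ y hy x => ?_⟩
    obtain ⟨g, hg, hv⟩ := hY' y hy x
    refine ⟨g, hg, fun a ha => ?_⟩
    rw [← hpA a ha]
    exact hv a.1.1 (Finset.mem_coe.2 (Finset.mem_image.2 ⟨a, ha, rfl⟩)) a.1.2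
      (Finset.mem_coe.2 (Finset.mem_image.2 ⟨a, ha, rfl⟩))
  · refine ⟨Y, Set.Subset.refl _, hY, fun h1 h2 => absurd ⟨h1, h2⟩ h⟩

lemma exists_Y [Countable G] [Infinite G] {X : Type*} [TopologicalSpace X] [CompactSpace X]
    [SecondCountableTopology X] [MulAction G X]
    [ContinuousConstSMul G X] (hmin : ∀ x : X, Dense (MulAction.orbit G x)) :
    ∃ Y : Set (G × G → Fin 3), Y.Nonempty ∧ IsClosed Y ∧ (∀ g, ∀ y ∈ Y, sh g y ∈ Y) ∧ Y ⊆ Y0 G ∧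
      ∀ (U : Set X) (O : Set (G × G → Fin 3)), IsOpen U → IsOpen O → U.Nonempty →
        (Y ∩ O).Nonempty → ∀ y ∈ Y, ∀ x : X, ∃ g : G, g • x ∈ U ∧ sh g y ∈ O := by
  classical
  obtain ⟨b, hbc, hbe, hb⟩ := TopologicalSpace.exists_countable_basis X
  let T := Option (b × Finset ((G × G) × Fin 3))
  have : Countable b := hbc.to_subtype
  obtain ⟨e, he⟩ := exists_surjective_nat T
  have hstep : ∀ (t : T) (Y : {Y : Set (G × G → Fin 3) // Good Y}),
      ∃ Y' : {Y : Set (G × G → Fin 3) // Good Y}, Y'.1 ⊆ Y.1 ∧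
        ∀ s, t = some s → s.1.1.Nonempty → (Y'.1 ∩ cyl s.2).Nonempty →
          ∀ y ∈ Y'.1, ∀ x : X, ∃ g : G, g • x ∈ s.1.1 ∧ sh g y ∈ cyl s.2 := by
    rintro (_ | s) ⟨Y, hY⟩
    · exact ⟨⟨Y, hY⟩, Set.Subset.refl _, by simp⟩
    · obtain ⟨Y', h1, h2, h3⟩ := step_cyl hmin hY s.1.1 (hb.isOpen s.1.2) s.2
      refine ⟨⟨Y', h2⟩, h1, ?_⟩
      rintro s' hs'
      obtain rfl : s = s' := Option.some.inj hs'
      exact h3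
  choose nxt hn1 hn2 using hstep
  let Yn : ℕ → {Y : Set (G × G → Fin 3) // Good Y} := fun n =>
    Nat.rec ⟨Y0 G, good_Y0⟩ (fun n Y => nxt (e n) Y) n
  have hsucc : ∀ n, Yn (n + 1) = nxt (e n) (Yn n) := fun n => rfl
  refine ⟨⋂ n, (Yn n).1, ?_, ?_, ?_, ?_, ?_⟩
  · refine IsCompact.nonempty_iInter_of_sequence_nonempty_isCompact_isClosed _ ?_ ?_ ?_ ?_
    · intro n; rw [hsucc]; exact hn1 _ _
    · intro n; exact (Yn n).2.nonempty
    · exact (Yn 0).2.closed.isCompact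
    · intro n; exact (Yn n).2.closed
  · exact isClosed_iInter fun n => (Yn n).2.closed
  · intro g y hy
    rw [Set.mem_iInter] at hy ⊢
    exact fun n => (Yn n).2.inv g y (hy n)
  · exact Set.iInter_subset _ 0
  · rintro U O hU hO ⟨x0, hx0⟩ ⟨y0, hy0, hy0O⟩ y hy x
    obtain ⟨V, hVb, hxV, hVU⟩ := hb.exists_subset_of_mem_open hx0 hU
    obtain ⟨A, hA, hAO⟩ := exists_cyl O hO y0 hy0O
    obtain ⟨n, hn⟩ := he (some (⟨V, hVb⟩, A))
    rw [Set.mem_iInter] at hy hy0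
    have h1 := hy (n + 1)
    have h2 := hy0 (n + 1)
    rw [hsucc] at h1 h2
    obtain ⟨g, hg1, hg2⟩ := hn2 (e n) (Yn n) _ hn ⟨x0, hxV⟩ ⟨y0, h2, hA⟩ y h1 x
    exact ⟨g, hVU hg1, hAO hg2⟩
end
end BD

/-- Let `G` be a countable, infinite discrete group and `X` a metrizable,
minimal `G`-flow.  Then there exists a minimal, metrizable, free `G`-flow `Y` disjoint
from `X`. -/
theorem exists_free_minimal_flow_disjoint_from
    {G : Type u} [Group G] [Countable G] [Infinite G]
    (X : Type v) [TopologicalSpace X] [CompactSpace X] [T2Space X] [Nonempty X]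
    [TopologicalSpace.MetrizableSpace X] [MulAction G X] [ContinuousConstSMul G X]
    (hXmin : IsMinimalFlow G X) :
    ∃ Y : GFlow G,
      CompactSpace Y.carrier ∧ T2Space Y.carrier ∧ Nonempty Y.carrier ∧
      TopologicalSpace.MetrizableSpace Y.carrier ∧ ContinuousConstSMul G Y.carrier ∧
      IsMinimalFlow G Y.carrier ∧
      (∀ (g : G) (y : Y.carrier), g • y = y → g = 1) ∧
      FlowsDisjoint G X Y.carrier := by
  have hsc : SecondCountableTopology X := by
    let _ := TopologicalSpace.metrizableSpaceMetric X
    infer_instance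
  obtain ⟨Y, hne, hcl, hinv, hY0, hY⟩ := BD.exists_Y (G := G) (X := X) hXmin
  let act : MulAction G Y :=
    { smul := fun g y => ⟨BD.sh g y.1, hinv g y.1 y.2⟩
      one_smul := fun y => Subtype.ext (funext fun p => by
        show y.1 (p.1 * 1, p.2) = y.1 p
        rw [mul_one])
      mul_smul := fun g h y => Subtype.ext (funext fun p => by
        show y.1 (p.1 * (g * h), p.2) = y.1 (p.1 * g * h, p.2)
        rw [mul_assoc]) }
  have hact : ∀ (g : G) (y : Y), (g • y).1 = BD.sh g y.1 := fun _ _ => rfl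
  have hcomp : CompactSpace Y := isCompact_iff_compactSpace.1 hcl.isCompact
  have key : ∀ (U : Set X) (O : Set Y), IsOpen U → IsOpen O → U.Nonempty → O.Nonempty →
      ∀ (x : X) (y : Y), ∃ g : G, g • x ∈ U ∧ g • y ∈ O := by
    rintro U O hU hO hUne ⟨y0, hy0⟩ x y
    obtain ⟨O', hO', rfl⟩ := isOpen_induced_iff.1 hO
    exact hY U O' hU hO' hUne ⟨y0.1, y0.2, hy0⟩ y.1 y.2 x
  refine ⟨{ carrier := Y, topology := inferInstance, mulAction := act }, hcomp,
    inferInstanceAs (T2Space Y), hne.to_subtype, ?_, ?_, ?_, ?_, ?_⟩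
  · exact TopologicalSpace.metrizableSpace_of_t3_secondCountable Y
  · exact ⟨fun g => ((BD.continuous_sh g).comp continuous_subtype_val).subtype_mk _⟩
  · intro y
    rw [dense_iff_inter_open]
    intro O hO hOne
    obtain ⟨x⟩ := ‹Nonempty X›
    obtain ⟨g, _, hg⟩ := key Set.univ O isOpen_univ hO ⟨x, trivial⟩ hOne x y
    exact ⟨g • y, hg, ⟨g, rfl⟩⟩
  · intro g y hgy
    by_contra hg
    have h1 := hY0 y.2 g 1 hg
    have h2 : BD.sh g y.1 = y.1 := congrArg Subtype.val hgy
    apply h1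
    have h3 := congrFun h2 (1, g)
    rw [BD.sh_apply] at h3
    rw [← h3, mul_one, one_mul]
  · intro J hJ hJinv hJ1 _
    obtain ⟨x0⟩ := ‹Nonempty X›
    obtain ⟨p, hp, _⟩ : x0 ∈ Prod.fst '' J := by rw [hJ1]; trivial
    by_contra hcon
    obtain ⟨r, hr⟩ := (Set.ne_univ_iff_exists_notMem J).1 hcon
    obtain ⟨U, O, hU, hO, hrU, hrO, hsub⟩ := isOpen_prod_iff.1 hJ.isOpen_compl r.1 r.2 hr
    obtain ⟨g, hg1, hg2⟩ := key U O hU hO ⟨_, hrU⟩ ⟨_, hrO⟩ p.1 p.2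
    exact hsub (Set.mk_mem_prod hg1 hg2) (hJinv g p hp)
end
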